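/- arXiv:2410.13834 — 2 statements merged into one kernel-verified Lean document; each statement's English description precedes it below -/
import Mathlib

section
/- Let d > 2 be an integer and c₀ > 0. There exist constants c > 0, C > 0 and α₀ ∈ (0,1), depending only on d and c₀, such that for all α ∈ (0, α₀) and all x ∈ ℤ^d with ‖x‖ ≥ c₀/√α: g_α(x) ≤ C·e^{−c·‖x‖·√α}·g(x). -/
/-!
The bound follows from comparing both Green's functions with explicit potentials
`pot m A x = (‖x‖² + A) ^ (-m)`, `m = (d - 2) / 2`.

The binomial expansion of `(1 + u) ^ (-m)` shows (`nbrAvg_pot_expand`) that the discrete Laplacian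
of `pot m A` is `-(A + O(1))` times a positive quantity, with the `O(1)` depending only on `d`. So
for a large constant `L`, `pot m L` is strictly superharmonic on all of `ℤ^d`, and `pot m (-L)` is
strictly subharmonic outside a ball.

* Upper bound for `g`: the partial sums `G_n` of a Green's series satisfy
  `G_{n+1} = δ₀ + q P G_n`, so by induction they stay below any nonnegative supersolution
  (`greenPartial_le`). A multiple of `pot m L` is one for `q = 1`; this gives `g ≤ C₁ pot m L`, in
  particular `g` is finite.
* Lower bound for `g`: the maximum principle for `pot m (-L) - C₂ g`, which is nonpositive on a ball
  and has nonpositive limsup at infinity, gives `pot m (-L) ≤ C₂ g` (`exists_pot_le_greenR`).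
* Upper bound for `g_α`: for `|ε| = c √α` with `c` small, the tilted potential
  `exp (-ε y_i) pot m L y` is a supersolution of the killed equation on `‖y‖ ≥ c₀ / √α`, since there
  `pot m L` has relative gradient `O(√α / c₀)`; on the complement the tilt is at least
  `exp (-c c₀)` and `g_α ≤ g` suffices (`greenPartial_tilt_le`).

Taking `i` to be the largest coordinate of `x`, so that `|x_i| ≥ ‖x‖ / √d`, and
`pot m L x ≤ pot m (-L) x ≤ C₂ g(x)` finishes the proof.
-/

open Filter

noncomputable section

/-- `srwP d k x` is the probability that the simple random walk on `ℤ^d`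
started at `0` is at `x` at time `k`. -/
def srwP (d : ℕ) : ℕ → (Fin d → ℤ) → ENNReal
  | 0, x => if x = 0 then 1 else 0
  | k + 1, x =>
      (2 * d : ENNReal)⁻¹ *
        ∑ i : Fin d, (srwP d k (x - Pi.single i 1) + srwP d k (x + Pi.single i 1))

/-- The Euclidean norm on `ℤ^d`. -/
def nrmZ (d : ℕ) (x : Fin d → ℤ) : ℝ := Real.sqrt (∑ i, ((x i : ℝ)) ^ 2)

/-- The Green's function of the simple random walk on `ℤ^d`. -/
def green (d : ℕ) (x : Fin d → ℤ) : ENNReal := ∑' k : ℕ, srwP d k x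

/-- Convolution of two `[0,∞]`-valued functions on `ℤ^d`. -/
def convE (d : ℕ) (f h : (Fin d → ℤ) → ENNReal) (z : Fin d → ℤ) : ENNReal :=
  ∑' x, f x * h (z - x)


/-- The Green's function `g_α(x) = Σ_k (1−α)^k P(X_k = x)` of the killed walk. -/
def greenK (d : ℕ) (α : ℝ) (x : Fin d → ℤ) : ENNReal :=
  ∑' k : ℕ, ENNReal.ofReal ((1 - α) ^ k) * srwP d k x

/-! ### Binomial expansion -/

/-- Second-order expansions at `0` of `u ↦ (1 + u) ^ (-m)` and of its even part, with uniform
remainders, read off from the binomial series. -/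
lemma exists_binomial_bounds (m : ℝ) :
    ∃ δ K : ℝ, 0 < δ ∧ δ ≤ 1 / 2 ∧ 0 < K ∧ ∀ u : ℝ, |u| ≤ δ →
      |(1 + u) ^ (-m) + (1 - u) ^ (-m) - 2 - m * (m + 1) * u ^ 2| ≤ K * u ^ 4 ∧
      |(1 + u) ^ (-m) - 1 + m * u| ≤ K * u ^ 2 := by
  have hser := Real.one_add_rpow_hasFPowerSeriesAt_zero (a := -m)
  have hc : ∀ n, (binomialSeries ℝ (-m)).coeff n = Ring.choose (-m) n := fun n => by
    rw [FormalMultilinearSeries.coeff, binomialSeries_apply, List.prod_ofFn]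
    simp
  have c0 : (binomialSeries ℝ (-m)).coeff 0 = 1 := by rw [hc, Ring.choose_zero_right]
  have c1 : (binomialSeries ℝ (-m)).coeff 1 = -m := by rw [hc, Ring.choose_one_right]
  have c2 : (binomialSeries ℝ (-m)).coeff 2 = m * (m + 1) / 2 := by
    rw [hc, Ring.choose_eq_smul]
    simp [descPochhammer, Polynomial.smeval_mul, Polynomial.smeval_X, Polynomial.smeval_sub,
      Polynomial.smeval_one]
    ring
  obtain ⟨K₂, hK₂⟩ := (hser.isBigO_sub_partialSum_pow 2).bound
  obtain ⟨K₄, hK₄⟩ := (hser.isBigO_sub_partialSum_pow 4).bound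
  obtain ⟨r, hr, hball⟩ := Metric.eventually_nhds_iff.1 (hK₂.and hK₄)
  refine ⟨min (r / 2) (1 / 2), max 1 (max K₂ (2 * K₄)), by positivity, min_le_right _ _,
    by positivity, fun u hu => ?_⟩
  have hur : |u| < r := lt_of_le_of_lt (hu.trans (min_le_left _ _)) (by linarith)
  obtain ⟨h2, h4⟩ := hball (y := u) (by simpa using hur)
  obtain ⟨-, h4'⟩ := hball (y := -u) (by simpa using hur)
  simp [FormalMultilinearSeries.partialSum, Finset.sum_range_succ, c0, c1, c2] at h2 h4 h4'
  rw [Even.pow_abs (by decide)] at h4 h4'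
  constructor
  · have h5 : 2 * K₄ * u ^ 4 ≤ max 1 (max K₂ (2 * K₄)) * u ^ 4 := by
      gcongr
      exact (le_max_right _ _).trans (le_max_right _ _)
    refine le_trans ?_ h5
    rw [abs_le] at h4 h4' ⊢
    rw [← sub_eq_add_neg] at h4'
    constructor <;> nlinarith [h4.1, h4.2, h4'.1, h4'.2]
  · have h5 : K₂ * u ^ 2 ≤ max 1 (max K₂ (2 * K₄)) * u ^ 2 := by
      gcongr
      exact (le_max_left _ _).trans (le_max_right _ _)
    refine le_trans ?_ h5
    have e : (1 + u) ^ (-m) - 1 + m * u = (1 + u) ^ (-m) - (1 + -(u * m)) := by ring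
    rw [e]
    exact h2

/-! ### The walk, its Green's functions and the comparison principle -/

/-- The transition operator of the walk on real functions: the mean over the `2d` neighbours. -/
def nbrAvg (d : ℕ) (f : (Fin d → ℤ) → ℝ) (x : Fin d → ℤ) : ℝ :=
  (2 * d : ℝ)⁻¹ * ∑ i : Fin d, (f (x - Pi.single i 1) + f (x + Pi.single i 1))

/-- The real-valued transition probability `P(X_k = x)`. -/
def srwR (d k : ℕ) (x : Fin d → ℤ) : ℝ := (srwP d k x).toReal

/-- Partial sums of the (killed) Green's function, with survival probability `q` per step. -/
def greenPartial (d : ℕ) (q : ℝ) (n : ℕ) (x : Fin d → ℤ) : ℝ :=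
  ∑ k ∈ Finset.range n, q ^ k * srwR d k x

/-- The Green's function as a real number (meaningful where the series converges). -/
def greenR (d : ℕ) (x : Fin d → ℤ) : ℝ := ∑' k : ℕ, srwR d k x

lemma nbrAvg_mono {d : ℕ} {f h : (Fin d → ℤ) → ℝ} (hfh : ∀ x, f x ≤ h x) (x : Fin d → ℤ) :
    nbrAvg d f x ≤ nbrAvg d h x := by
  unfold nbrAvg
  gcongr <;> apply hfh

lemma nbrAvg_const {d : ℕ} (hd : 0 < d) (a : ℝ) (x : Fin d → ℤ) :
    nbrAvg d (fun _ => a) x = a := by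
  have : (d : ℝ) ≠ 0 := by positivity
  simp [nbrAvg]
  field_simp
  ring

lemma nbrAvg_const_mul {d : ℕ} (a : ℝ) (f : (Fin d → ℤ) → ℝ) (x : Fin d → ℤ) :
    nbrAvg d (fun y => a * f y) x = a * nbrAvg d f x := by
  simp only [nbrAvg, ← mul_add, ← Finset.mul_sum]
  ring

lemma nbrAvg_sub {d : ℕ} (f h : (Fin d → ℤ) → ℝ) (x : Fin d → ℤ) :
    nbrAvg d (fun y => f y - h y) x = nbrAvg d f x - nbrAvg d h x := by
  simp only [nbrAvg, ← mul_sub, ← Finset.sum_sub_distrib]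
  congr 1
  refine Finset.sum_congr rfl fun i _ => ?_
  ring

lemma srwP_ne_top {d : ℕ} (hd : 0 < d) (k : ℕ) (x : Fin d → ℤ) : srwP d k x ≠ ⊤ := by
  induction k generalizing x with
  | zero => unfold srwP; split_ifs <;> simp
  | succ k ih =>
    unfold srwP
    refine ENNReal.mul_ne_top ?_ ?_
    · simp [hd.ne']
    · exact ENNReal.sum_ne_top.2 fun i _ => ENNReal.add_ne_top.2 ⟨ih _, ih _⟩

lemma srwR_nonneg (d k : ℕ) (x : Fin d → ℤ) : 0 ≤ srwR d k x := ENNReal.toReal_nonneg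

lemma srwR_zero (d : ℕ) (x : Fin d → ℤ) : srwR d 0 x = if x = 0 then 1 else 0 := by
  unfold srwR srwP
  split_ifs <;> simp

lemma srwR_succ {d : ℕ} (hd : 0 < d) (k : ℕ) (x : Fin d → ℤ) :
    srwR d (k + 1) x = nbrAvg d (srwR d k) x := by
  unfold nbrAvg srwR
  rw [srwP, ENNReal.toReal_mul, ENNReal.toReal_sum]
  · simp [ENNReal.toReal_add (srwP_ne_top hd k _) (srwP_ne_top hd k _)]
  · exact fun i _ => ENNReal.add_ne_top.2 ⟨srwP_ne_top hd k _, srwP_ne_top hd k _⟩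

lemma greenPartial_succ {d : ℕ} (hd : 0 < d) (q : ℝ) (n : ℕ) (x : Fin d → ℤ) :
    greenPartial d q (n + 1) x =
      (if x = 0 then 1 else 0) + q * nbrAvg d (greenPartial d q n) x := by
  unfold greenPartial
  rw [Finset.sum_range_succ', add_comm, srwR_zero]
  simp only [srwR_succ hd, pow_zero, one_mul]
  congr 1
  simp only [nbrAvg, ← Finset.sum_add_distrib]
  rw [Finset.sum_comm, Finset.mul_sum, Finset.mul_sum]
  refine Finset.sum_congr rfl fun k _ => ?_
  simp only [← mul_add, ← Finset.mul_sum]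
  ring

/-- Comparison principle: a nonnegative supersolution on `D` that dominates the partial sums off
`D` dominates them everywhere. -/
lemma greenPartial_le {d : ℕ} (hd : 0 < d) {q : ℝ} (hq : 0 ≤ q) (φ : (Fin d → ℤ) → ℝ)
    (hφ : ∀ x, 0 ≤ φ x) (D : Set (Fin d → ℤ))
    (hD : ∀ x ∈ D, (if x = 0 then 1 else 0) + q * nbrAvg d φ x ≤ φ x)
    (hDc : ∀ x ∉ D, ∀ n, greenPartial d q n x ≤ φ x) (n : ℕ) (x : Fin d → ℤ) :
    greenPartial d q n x ≤ φ x := by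
  induction n generalizing x with
  | zero => simpa [greenPartial] using hφ x
  | succ n ih =>
    by_cases hx : x ∈ D
    · refine le_trans ?_ (hD x hx)
      rw [greenPartial_succ hd]
      gcongr
      exact nbrAvg_mono ih x
    · exact hDc x hx _

lemma greenK_le {d : ℕ} (hd : 0 < d) {α : ℝ} (hα : α ≤ 1) (x : Fin d → ℤ) (b : ℝ)
    (h : ∀ n, greenPartial d (1 - α) n x ≤ b) : greenK d α x ≤ ENNReal.ofReal b := by
  refine ENNReal.tsum_le_of_sum_range_le fun n => ?_
  refine le_trans (le_of_eq ?_) (ENNReal.ofReal_le_ofReal (h n))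
  have hq : 0 ≤ 1 - α := by linarith
  unfold greenPartial
  rw [ENNReal.ofReal_sum_of_nonneg fun k _ => mul_nonneg (pow_nonneg hq k) (srwR_nonneg d k x)]
  refine Finset.sum_congr rfl fun k _ => ?_
  rw [ENNReal.ofReal_mul (pow_nonneg hq k), srwR, ENNReal.ofReal_toReal (srwP_ne_top hd k x)]

lemma greenPartial_one (d n : ℕ) (x : Fin d → ℤ) :
    greenPartial d 1 n x = ∑ k ∈ Finset.range n, srwR d k x := by
  simp [greenPartial]

lemma greenPartial_le_one (d n : ℕ) {q : ℝ} (hq : 0 ≤ q) (hq1 : q ≤ 1) (x : Fin d → ℤ) :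
    greenPartial d q n x ≤ greenPartial d 1 n x := by
  rw [greenPartial_one]
  exact Finset.sum_le_sum fun k _ =>
    mul_le_of_le_one_left (srwR_nonneg d k x) (pow_le_one₀ hq hq1)

lemma green_eq_ofReal {d : ℕ} (hd : 0 < d) (x : Fin d → ℤ) (hs : Summable fun k => srwR d k x) :
    green d x = ENNReal.ofReal (greenR d x) := by
  unfold green greenR
  rw [ENNReal.ofReal_tsum_of_nonneg (fun k => srwR_nonneg d k x) hs]
  simp [srwR, ENNReal.ofReal_toReal, srwP_ne_top hd]

lemma greenR_eq {d : ℕ} (hd : 0 < d) (hs : ∀ x : Fin d → ℤ, Summable fun k => srwR d k x)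
    (x : Fin d → ℤ) :
    greenR d x = (if x = 0 then 1 else 0) + nbrAvg d (greenR d) x := by
  unfold greenR
  rw [(hs x).tsum_eq_zero_add, srwR_zero]
  congr 1
  simp only [srwR_succ hd, nbrAvg]
  rw [tsum_mul_left, Summable.tsum_finsetSum fun i _ => (hs _).add (hs _)]
  congr 1
  exact Finset.sum_congr rfl fun i _ => (hs _).tsum_add (hs _)

/-- Positivity spreads from `0` to neighbours, hence along coordinate directions to all of
`ℤ^d`. -/
lemma greenR_pos {d : ℕ} (hd : 0 < d) (hs : ∀ x : Fin d → ℤ, Summable fun k => srwR d k x)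
    (x : Fin d → ℤ) : 0 < greenR d x := by
  have hnn : ∀ y, 0 ≤ greenR d y := fun y => tsum_nonneg fun k => srwR_nonneg d k y
  have hd' : (0 : ℝ) < (2 * d : ℝ)⁻¹ := by positivity
  have hstep : ∀ (y : Fin d → ℤ) (i : Fin d),
      0 < greenR d (y - Pi.single i 1) + greenR d (y + Pi.single i 1) → 0 < greenR d y := by
    intro y i h
    rw [greenR_eq hd hs]
    refine add_pos_of_nonneg_of_pos (by split_ifs <;> norm_num) (mul_pos hd' ?_)
    exact Finset.sum_pos' (fun j _ => add_nonneg (hnn _) (hnn _)) ⟨i, Finset.mem_univ i, h⟩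
  have hline : ∀ (i : Fin d) (n : ℤ) (y : Fin d → ℤ), 0 < greenR d y →
      0 < greenR d (y + Pi.single i n) := by
    intro i n
    induction n using Int.induction_on with
    | zero => intro y hy; simpa using hy
    | succ n ih =>
      intro y hy
      refine hstep _ i (add_pos_of_pos_of_nonneg ?_ (hnn _))
      have := ih y hy
      rwa [Pi.single_add, ← add_assoc, add_sub_cancel_right]
    | pred n ih =>
      intro y hy
      refine hstep _ i (add_pos_of_nonneg_of_pos (hnn _) ?_)
      have := ih y hy
      rwa [Pi.single_sub, add_assoc, sub_add_cancel]
  have h0 : 0 < greenR d 0 := by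
    rw [greenR_eq hd hs]
    have : 0 ≤ nbrAvg d (greenR d) 0 :=
      mul_nonneg hd'.le (Finset.sum_nonneg fun j _ => add_nonneg (hnn _) (hnn _))
    simp only [if_true]
    linarith
  have hfin : ∀ s : Finset (Fin d), 0 < greenR d (∑ i ∈ s, Pi.single i (x i)) := by
    intro s
    induction s using Finset.induction_on with
    | empty => simpa using h0
    | insert i s his ih => rw [Finset.sum_insert his, add_comm]; exact hline i _ _ ih
  have := hfin Finset.univ
  rwa [Finset.univ_sum_single] at this

/-! ### Shifted Newtonian potentials -/

/-- The squared Euclidean norm on `ℤ^d`. -/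
def sqZ {d : ℕ} (x : Fin d → ℤ) : ℝ := ∑ i, (x i : ℝ) ^ 2

/-- The shifted Newtonian potential `(‖x‖² + A) ^ (-m)`; the relevant exponent is
`m = (d - 2) / 2`, and `A` may be negative. -/
def pot {d : ℕ} (m A : ℝ) (x : Fin d → ℤ) : ℝ := (sqZ x + A) ^ (-m)

lemma sqZ_nonneg {d : ℕ} (x : Fin d → ℤ) : 0 ≤ sqZ x := Finset.sum_nonneg fun _ _ => sq_nonneg _

lemma sq_le_sqZ {d : ℕ} (x : Fin d → ℤ) (i : Fin d) : (x i : ℝ) ^ 2 ≤ sqZ x :=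
  Finset.single_le_sum (f := fun i => (x i : ℝ) ^ 2) (fun _ _ => sq_nonneg _) (Finset.mem_univ i)

lemma sqZ_add_single {d : ℕ} (x : Fin d → ℤ) (i : Fin d) :
    sqZ (x + Pi.single i 1) = sqZ x + 2 * x i + 1 := by
  unfold sqZ
  have h : ∀ j, (((x + Pi.single i 1 : Fin d → ℤ) j : ℤ) : ℝ) ^ 2 =
      (x j : ℝ) ^ 2 + if j = i then 2 * (x i : ℝ) + 1 else 0 := by
    intro j
    by_cases hj : j = i
    · subst hj; simp; ring
    · simp [hj]
  rw [Finset.sum_congr rfl fun j _ => h j, Finset.sum_add_distrib]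
  simp
  ring

lemma sqZ_sub_single {d : ℕ} (x : Fin d → ℤ) (i : Fin d) :
    sqZ (x - Pi.single i 1) = sqZ x - 2 * x i + 1 := by
  have h := sqZ_add_single (x - Pi.single i 1) i
  simp at h
  linarith

lemma pot_eq_mul {d : ℕ} (m A : ℝ) (x : Fin d → ℤ) (v u : ℝ) (hv : 0 < v) (hu : |u| ≤ 1)
    (h : sqZ x + A = v * (1 + u)) : pot m A x = v ^ (-m) * (1 + u) ^ (-m) := by
  rw [pot, h, Real.mul_rpow hv.le (by linarith [neg_le_of_abs_le hu])]

/-- The step quotients `2 x_i / v`, with `v = ‖x‖² + A + 1`, are small when `v` is large. -/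
lemma abs_step_le {d : ℕ} (x : Fin d → ℤ) (i : Fin d) {δ v : ℝ} (hδ : 0 < δ) (hv : 0 < v)
    (h1 : 8 ≤ δ ^ 2 * v) (h2 : sqZ x ≤ 2 * v) : |2 * x i / v| ≤ δ := by
  refine abs_le_of_sq_le_sq ?_ hδ.le
  rw [div_pow, div_le_iff₀ (by positivity)]
  nlinarith [sq_le_sqZ x i]

/-- The Laplacian of the shifted potential: to leading order `2d (P - I) pot m A` is
`-2dm(A+1) (‖x‖² + A + 1) ^ (-m-2)`, with an error of the same order whose constant does not
depend on `A`. Hence the sign of a large `A` decides between super- and subharmonicity. -/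
lemma nbrAvg_pot_expand {d : ℕ} (hd : 0 < d) {m δ K A : ℝ} (hm : m = ((d : ℝ) - 2) / 2)
    (hδ : 0 < δ) (hδ1 : δ ≤ 1 / 2) (hK : 0 < K)
    (hB : ∀ u : ℝ, |u| ≤ δ →
      |(1 + u) ^ (-m) + (1 - u) ^ (-m) - 2 - m * (m + 1) * u ^ 2| ≤ K * u ^ 4 ∧
      |(1 + u) ^ (-m) - 1 + m * u| ≤ K * u ^ 2)
    (x : Fin d → ℤ) {v : ℝ} (hv : v = sqZ x + A + 1) (hv0 : 0 < v)
    (h1 : 8 ≤ δ ^ 2 * v) (h2 : sqZ x ≤ 2 * v) :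
    |2 * d * (nbrAvg d (pot m A) x - pot m A x) + 2 * d * m * (A + 1) * (v ^ (-m) / v ^ 2)| ≤
      (64 * K + 2 * d * K) * (v ^ (-m) / v ^ 2) := by
  have hdR : (0 : ℝ) < d := by positivity
  set w := v ^ (-m) with hw
  have hw0 : 0 < w := by positivity
  have hu : ∀ i, |2 * x i / v| ≤ δ := fun i => abs_step_le x i hδ hv0 h1 h2
  have hplus : ∀ i, pot m A (x + Pi.single i 1) = w * (1 + 2 * x i / v) ^ (-m) := fun i =>
    pot_eq_mul m A _ v _ hv0 (by linarith [hu i]) (by rw [sqZ_add_single]; field_simp; linarith)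
  have hminus : ∀ i, pot m A (x - Pi.single i 1) = w * (1 - 2 * x i / v) ^ (-m) := fun i => by
    have := pot_eq_mul m A (x - Pi.single i 1) v (-(2 * x i / v)) hv0
      (by rw [abs_neg]; linarith [hu i]) (by rw [sqZ_sub_single]; field_simp; linarith)
    rwa [← sub_eq_add_neg] at this
  have ht : |-(1 / v)| ≤ δ := by
    rw [abs_neg, abs_of_pos (by positivity), div_le_iff₀ hv0]
    nlinarith [mul_pos hδ hv0]
  have hzero : pot m A x = w * (1 + -(1 / v)) ^ (-m) :=
    pot_eq_mul m A x v _ hv0 (by linarith) (by field_simp; linarith)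
  set S : ℝ := ∑ i, ((1 + 2 * x i / v) ^ (-m) + (1 - 2 * x i / v) ^ (-m)) with hS
  have havg : 2 * d * nbrAvg d (pot m A) x = w * S := by
    rw [nbrAvg, ← mul_assoc, mul_inv_cancel₀ (by positivity), one_mul, hS, Finset.mul_sum]
    refine Finset.sum_congr rfl fun i _ => ?_
    rw [hplus, hminus]
    ring
  set T : ℝ := (1 + -(1 / v)) ^ (-m) with hT
  have hTb : |T - 1 + m * -(1 / v)| ≤ K * (-(1 / v)) ^ 2 := (hB _ ht).2
  have hsum2 : ∑ i, (2 * x i / v) ^ 2 = 4 * sqZ x / v ^ 2 := by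
    rw [sqZ, Finset.mul_sum, Finset.sum_div]
    exact Finset.sum_congr rfl fun i _ => by ring
  have hsum4 : ∑ i, (2 * x i / v) ^ 4 ≤ 64 / v ^ 2 := by
    have ha : ∑ i, (2 * x i / v) ^ 4 ≤ ∑ i, (2 * x i / v) ^ 2 * (4 * sqZ x / v ^ 2) := by
      refine Finset.sum_le_sum fun i _ => ?_
      have : (2 * x i / v) ^ 2 ≤ 4 * sqZ x / v ^ 2 := by
        rw [div_pow]
        gcongr
        nlinarith [sq_le_sqZ x i]
      calc (2 * x i / v) ^ 4 = (2 * x i / v) ^ 2 * (2 * x i / v) ^ 2 := by ring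
        _ ≤ _ := by gcongr
    refine ha.trans ?_
    rw [← Finset.sum_mul, hsum2, div_mul_div_comm, div_le_div_iff₀ (by positivity) (by positivity)]
    have := sqZ_nonneg x
    have h3 : sqZ x * sqZ x ≤ 2 * v * (2 * v) := by gcongr
    nlinarith [mul_le_mul_of_nonneg_right h3 (sq_nonneg v)]
  have hSb : |S - 2 * d - m * (m + 1) * (4 * sqZ x / v ^ 2)| ≤ K * (64 / v ^ 2) := by
    have e : S - 2 * d - m * (m + 1) * (4 * sqZ x / v ^ 2) =
        ∑ i, ((1 + 2 * x i / v) ^ (-m) + (1 - 2 * x i / v) ^ (-m) - 2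
          - m * (m + 1) * (2 * x i / v) ^ 2) := by
      rw [Finset.sum_sub_distrib, Finset.sum_sub_distrib, ← Finset.mul_sum, hsum2]
      simp [hS]
      ring
    rw [e]
    calc _ ≤ ∑ i, K * (2 * x i / v) ^ 4 :=
          (Finset.abs_sum_le_sum_abs _ _).trans (Finset.sum_le_sum fun i _ => (hB _ (hu i)).1)
      _ = K * ∑ i, (2 * x i / v) ^ 4 := (Finset.mul_sum _ _ _).symm
      _ ≤ _ := by gcongr
  have hid : 2 * d * (nbrAvg d (pot m A) x - pot m A x) + 2 * d * m * (A + 1) * (w / v ^ 2) =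
      w * ((S - 2 * d - m * (m + 1) * (4 * sqZ x / v ^ 2)) - 2 * d * (T - 1 + m * -(1 / v))) := by
    rw [mul_sub, havg, hzero]
    have hA : A + 1 = v - sqZ x := by linarith
    have hd' : (d : ℝ) = 2 * m + 2 := by linarith
    rw [hA, hd']
    field_simp
    ring
  rw [hid, abs_mul, abs_of_pos hw0]
  have h5 := abs_sub (S - 2 * d - m * (m + 1) * (4 * sqZ x / v ^ 2))
    (2 * d * (T - 1 + m * -(1 / v)))
  rw [abs_mul (2 * d : ℝ), abs_of_pos (by positivity : (0 : ℝ) < 2 * d)] at h5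
  have h6 : 2 * d * |T - 1 + m * -(1 / v)| ≤ 2 * d * (K * (-(1 / v)) ^ 2) := by gcongr
  calc _ ≤ w * (K * (64 / v ^ 2) + 2 * d * (K * (-(1 / v)) ^ 2)) := by
        gcongr
        linarith
    _ = _ := by field_simp

/-- For `L` large, `pot m L` is superharmonic on all of `ℤ^d`, `pot m (-L)` is subharmonic away
from the origin, and `pot m L` satisfies a Harnack and a gradient estimate. -/
lemma exists_pot_bounds {d : ℕ} (hd : 2 < d) {m : ℝ} (hm : m = ((d : ℝ) - 2) / 2) :
    ∃ L K : ℝ, 1 ≤ L ∧ 0 < K ∧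
      (∀ x : Fin d → ℤ, nbrAvg d (pot m L) x < pot m L x) ∧
      (∀ x : Fin d → ℤ, 2 * L ≤ sqZ x → pot m (-L) x < nbrAvg d (pot m (-L)) x) ∧
      (∀ (x : Fin d → ℤ) (i : Fin d), pot m L (x - Pi.single i 1) ≤ K * pot m L x ∧
        pot m L (x + Pi.single i 1) ≤ K * pot m L x) ∧
      (∀ (x : Fin d → ℤ) (i : Fin d) (r : ℝ), 0 < r → r ^ 2 ≤ sqZ x →
        |pot m L (x - Pi.single i 1) - pot m L (x + Pi.single i 1)| ≤ K / r * pot m L x) := by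
  have hd0 : 0 < d := by omega
  have hdR : (2 : ℝ) < d := by exact_mod_cast hd
  have hm0 : 0 < m := by linarith
  obtain ⟨δ, K, hδ, hδ1, hK, hB⟩ := exists_binomial_bounds m
  set K' := 64 * K + 2 * d * K with hK'
  have hK'0 : 0 < K' := by positivity
  set q := K' / (2 * d * m) with hq
  have hq0 : 0 < q := by positivity
  have hqK : 2 * d * m * q = K' := by rw [hq]; field_simp
  set L := 8 / δ ^ 2 + q + 2 with hL
  have h8 : 0 < 8 / δ ^ 2 := by positivity
  have hL1 : 8 / δ ^ 2 ≤ L := by linarith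
  have hL2 : 8 ≤ δ ^ 2 * L := by rwa [div_le_iff₀' (by positivity)] at hL1
  have hL0 : 0 < L := by linarith
  have hdm : (0 : ℝ) < 2 * d * m := by positivity
  have hpos : ∀ x : Fin d → ℤ, 0 < sqZ x + L + 1 ∧ 8 ≤ δ ^ 2 * (sqZ x + L + 1) ∧
      sqZ x ≤ 2 * (sqZ x + L + 1) := by
    intro x
    have := sqZ_nonneg x
    refine ⟨by linarith, hL2.trans ?_, by linarith⟩
    gcongr
    linarith
  have hstep : ∀ (x : Fin d → ℤ) (i : Fin d) , |2 * x i / (sqZ x + L + 1)| ≤ δ := fun x i =>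
    abs_step_le x i hδ (hpos x).1 (hpos x).2.1 (hpos x).2.2
  have hplus : ∀ (x : Fin d → ℤ) i, pot m L (x + Pi.single i 1) =
      (sqZ x + L + 1) ^ (-m) * (1 + 2 * x i / (sqZ x + L + 1)) ^ (-m) := fun x i => by
    have hv := (hpos x).1
    exact pot_eq_mul m L _ _ _ hv (by linarith [hstep x i])
      (by rw [sqZ_add_single]; field_simp; ring)
  have hminus : ∀ (x : Fin d → ℤ) i, pot m L (x - Pi.single i 1) =
      (sqZ x + L + 1) ^ (-m) * (1 + -(2 * x i / (sqZ x + L + 1))) ^ (-m) := fun x i => by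
    have hv := (hpos x).1
    exact pot_eq_mul m L _ _ _ hv (by rw [abs_neg]; linarith [hstep x i])
      (by rw [sqZ_sub_single]; field_simp; ring)
  have hmono : ∀ x : Fin d → ℤ, (sqZ x + L + 1) ^ (-m) ≤ pot m L x := fun x =>
    Real.rpow_le_rpow_of_nonpos (by linarith [sqZ_nonneg x]) (by linarith) (by linarith)
  have hbd : ∀ u : ℝ, |u| ≤ δ → (1 + u) ^ (-m) ≤ 1 + m + K := by
    intro u hu
    have h := (abs_le.1 (hB u hu).2).2
    have h1 := abs_le.1 (hu.trans hδ1)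
    have h2 : K * u ^ 2 ≤ K * 1 := by gcongr; nlinarith
    nlinarith
  refine ⟨L, max (1 + m + K) (4 * (m + K)), by linarith, by positivity, ?_, ?_, ?_, ?_⟩
  · intro x
    obtain ⟨h0, h1, h2⟩ := hpos x
    have h := nbrAvg_pot_expand hd0 hm hδ hδ1 hK hB x rfl h0 h1 h2
    have hw : 0 < (sqZ x + L + 1) ^ (-m) / (sqZ x + L + 1) ^ 2 := by positivity
    set w := (sqZ x + L + 1) ^ (-m) / (sqZ x + L + 1) ^ 2
    have h3 := (abs_le.1 h).2
    have h4 : K' * w < 2 * d * m * (L + 1) * w := by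
      gcongr
      rw [← hqK]
      gcongr
      linarith
    nlinarith
  · intro x hx
    have h0 : 0 < sqZ x + -L + 1 := by linarith
    have h1 : 8 ≤ δ ^ 2 * (sqZ x + -L + 1) := hL2.trans (by gcongr; linarith)
    have h := nbrAvg_pot_expand hd0 hm hδ hδ1 hK hB x rfl h0 h1 (by linarith)
    have hw : 0 < (sqZ x + -L + 1) ^ (-m) / (sqZ x + -L + 1) ^ 2 := by positivity
    set w := (sqZ x + -L + 1) ^ (-m) / (sqZ x + -L + 1) ^ 2
    have h3 := (abs_le.1 h).1
    have h4 : K' * w < 2 * d * m * (L - 1) * w := by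
      gcongr
      rw [← hqK]
      gcongr
      linarith
    nlinarith
  · intro x i
    have hw : 0 ≤ (sqZ x + L + 1) ^ (-m) := Real.rpow_nonneg (hpos x).1.le _
    have hp : 0 ≤ pot m L x := hw.trans (hmono x)
    rw [hplus, hminus]
    have hb1 := hbd _ (hstep x i)
    have hb2 := hbd (-(2 * x i / (sqZ x + L + 1))) (by rw [abs_neg]; exact hstep x i)
    have hmax := le_max_left (1 + m + K) (4 * (m + K))
    have key : ∀ b, b ≤ 1 + m + K → (sqZ x + L + 1) ^ (-m) * b ≤
        max (1 + m + K) (4 * (m + K)) * pot m L x := by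
      intro b hb
      calc _ ≤ (sqZ x + L + 1) ^ (-m) * max (1 + m + K) (4 * (m + K)) := by
            gcongr; exact hb.trans hmax
        _ ≤ pot m L x * max (1 + m + K) (4 * (m + K)) := by gcongr; exact hmono x
        _ = _ := mul_comm _ _
    exact ⟨key _ hb2, key _ hb1⟩
  · intro x i r hr hrx
    have hv := (hpos x).1
    have hw : 0 ≤ (sqZ x + L + 1) ^ (-m) := Real.rpow_nonneg hv.le _
    rw [hplus, hminus, ← mul_sub, abs_mul, abs_of_nonneg hw]
    set u := 2 * x i / (sqZ x + L + 1) with hu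
    have hua : |u| ≤ δ := hstep x i
    have hur : |u| ≤ 2 / r := by
      refine abs_le_of_sq_le_sq ?_ (by positivity)
      rw [hu, div_pow, div_pow, div_le_div_iff₀ (by positivity) (by positivity)]
      have := sq_le_sqZ x i
      have hs := sqZ_nonneg x
      have h1 : (x i : ℝ) ^ 2 * r ^ 2 ≤ sqZ x * sqZ x := by gcongr
      nlinarith
    have h1 := (hB u hua).2
    have h2 := (hB (-u) (by rwa [abs_neg])).2
    have h3 : K * u ^ 2 ≤ K * |u| := by
      gcongr
      rw [← sq_abs]
      nlinarith [abs_nonneg u]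
    have h4 : |(1 + -u) ^ (-m) - (1 + u) ^ (-m)| ≤ 2 * (m + K) * |u| := by
      rw [neg_sq] at h2
      rw [abs_le] at h1 h2 ⊢
      have h5 := mul_le_mul_of_nonneg_left (le_abs_self u) hm0.le
      have h6 := mul_le_mul_of_nonneg_left (neg_abs_le u) hm0.le
      constructor <;> linarith
    calc _ ≤ (sqZ x + L + 1) ^ (-m) * (2 * (m + K) * (2 / r)) := by
          gcongr
          exact h4.trans (by gcongr)
      _ ≤ pot m L x * (2 * (m + K) * (2 / r)) := by gcongr; exact hmono x
      _ = 4 * (m + K) / r * pot m L x := by ring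
      _ ≤ _ := by
          gcongr
          · exact hw.trans (hmono x)
          · exact le_max_right _ _

/-! ### Lower bound on the Green's function -/

lemma finite_sqZ_le (d : ℕ) (R : ℝ) : {x : Fin d → ℤ | sqZ x ≤ R}.Finite := by
  refine (Set.finite_Icc (fun _ : Fin d => -⌈R⌉) (fun _ => ⌈R⌉)).subset fun x hx => ?_
  have h : ∀ i, x i ^ 2 ≤ ⌈R⌉ := fun i => by
    have h1 : ((x i ^ 2 : ℤ) : ℝ) ≤ (⌈R⌉ : ℝ) := by
      push_cast
      exact (sq_le_sqZ x i).trans (le_trans hx (Int.le_ceil R))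
    exact_mod_cast h1
  refine ⟨fun i => ?_, fun i => ?_⟩
  · have := h i
    have h2 := Int.le_self_sq (-(x i))
    rw [neg_sq] at h2
    linarith
  · exact (Int.le_self_sq (x i)).trans (h i)

/-- Lower bound on the Green's function. If `pot m (-L) - C g` were positive somewhere, it would
attain its maximum (the potential vanishes at infinity and `g ≥ 0`), at a point outside the finite
exceptional set, contradicting strict subharmonicity there. -/
lemma exists_pot_le_greenR {d : ℕ} (hd : 0 < d) {m L : ℝ} (hm : 0 < m) (hL : 0 < L)
    (hs : ∀ x : Fin d → ℤ, Summable fun k => srwR d k x)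
    (hsub : ∀ x : Fin d → ℤ, 2 * L ≤ sqZ x → pot m (-L) x < nbrAvg d (pot m (-L)) x) :
    ∃ C : ℝ, 0 < C ∧ ∀ x : Fin d → ℤ, pot m (-L) x ≤ C * greenR d x := by
  have hg := greenR_pos hd hs
  have hN := finite_sqZ_le d (2 * L)
  set C : ℝ := 1 + ∑ y ∈ hN.toFinset, |pot m (-L) y| / greenR d y with hC
  have hnn : ∀ y ∈ hN.toFinset, 0 ≤ |pot m (-L) y| / greenR d y := fun y _ =>
    div_nonneg (abs_nonneg _) (hg y).le
  have hC0 : 0 < C := by linarith [Finset.sum_nonneg hnn]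
  refine ⟨C, hC0, ?_⟩
  have hnear : ∀ y : Fin d → ℤ, sqZ y ≤ 2 * L → pot m (-L) y ≤ C * greenR d y := by
    intro y hy
    have h1 := Finset.single_le_sum hnn (hN.mem_toFinset.2 hy)
    rw [← div_le_iff₀ (hg y)]
    have h2 : pot m (-L) y / greenR d y ≤ |pot m (-L) y| / greenR d y := by
      gcongr
      · exact (hg y).le
      · exact le_abs_self _
    linarith
  by_contra! hcon
  obtain ⟨x₀, hx₀⟩ := hcon
  set h : (Fin d → ℤ) → ℝ := fun y => pot m (-L) y - C * greenR d y with hh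
  set η := h x₀ with hη
  have hη0 : 0 < η := sub_pos.2 hx₀
  have hfar : ∀ y, η ≤ h y → 2 * L < sqZ y := by
    intro y hy
    by_contra! hc
    have := hnear y hc
    simp only [hh] at hy
    linarith
  have hfin : {y | η ≤ h y}.Finite := by
    refine (finite_sqZ_le d (L + η ^ (-(1 / m)))).subset fun y hy => ?_
    by_contra hc
    have hc' : η ^ (-(1 / m)) < sqZ y + -L := by
      have : L + η ^ (-(1 / m)) < sqZ y := not_le.1 hc
      linarith
    have h1 : pot m (-L) y < (η ^ (-(1 / m))) ^ (-m) :=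
      Real.rpow_lt_rpow_of_neg (by positivity) hc' (by linarith)
    rw [← Real.rpow_mul hη0.le, show -(1 / m) * -m = 1 by field_simp, Real.rpow_one] at h1
    have h2 : 0 < C * greenR d y := mul_pos hC0 (hg y)
    have h3 : η ≤ pot m (-L) y - C * greenR d y := hy
    linarith
  obtain ⟨z, hz, hmax⟩ := Set.exists_max_image _ h hfin ⟨x₀, le_refl η⟩
  have hmax' : ∀ y, h y ≤ h z := by
    intro y
    by_cases hy : η ≤ h y
    · exact hmax y hy
    · exact (not_le.1 hy).le.trans hz
  have hz2 := hfar z hz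
  have hz0 : z ≠ 0 := by
    rintro rfl
    simp [sqZ] at hz2
    linarith
  have h1 := nbrAvg_mono hmax' z
  rw [nbrAvg_const hd] at h1
  have h2 : nbrAvg d h z = nbrAvg d (pot m (-L)) z - C * nbrAvg d (greenR d) z := by
    rw [hh, nbrAvg_sub, nbrAvg_const_mul]
  have h3 := greenR_eq hd hs z
  rw [if_neg hz0, zero_add] at h3
  have h4 := hsub z hz2.le
  rw [h2, ← h3] at h1
  simp only [hh] at h1
  linarith

/-! ### Exponential decay of the killed Green's function -/

lemma nbrAvg_tilt {d : ℕ} (f : (Fin d → ℤ) → ℝ) (ε : ℝ) (i : Fin d) (x : Fin d → ℤ) :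
    nbrAvg d (fun y => Real.exp (-(ε * y i)) * f y) x =
      Real.exp (-(ε * x i)) * (nbrAvg d f x + (2 * d : ℝ)⁻¹ *
        ((Real.exp ε - 1) * f (x - Pi.single i 1) +
          (Real.exp (-ε) - 1) * f (x + Pi.single i 1))) := by
  have h : ∀ j, Real.exp (-(ε * ((x - Pi.single j 1 : Fin d → ℤ) i : ℤ))) * f (x - Pi.single j 1) +
      Real.exp (-(ε * ((x + Pi.single j 1 : Fin d → ℤ) i : ℤ))) * f (x + Pi.single j 1) =
      Real.exp (-(ε * x i)) * (f (x - Pi.single j 1) + f (x + Pi.single j 1)) +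
        if j = i then Real.exp (-(ε * x i)) * ((Real.exp ε - 1) * f (x - Pi.single i 1) +
          (Real.exp (-ε) - 1) * f (x + Pi.single i 1)) else 0 := by
    intro j
    by_cases hj : j = i
    · subst hj
      have e1 : Real.exp (-(ε * ((x j : ℝ) - 1))) = Real.exp (-(ε * x j)) * Real.exp ε := by
        rw [← Real.exp_add]; ring_nf
      have e2 : Real.exp (-(ε * ((x j : ℝ) + 1))) = Real.exp (-(ε * x j)) * Real.exp (-ε) := by
        rw [← Real.exp_add]; ring_nf
      simp only [Pi.sub_apply, Pi.add_apply, Pi.single_eq_same, if_true]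
      push_cast
      rw [e1, e2]
      ring
    · have hj' : i ≠ j := fun h => hj h.symm
      simp [hj, hj']
      ring
  unfold nbrAvg
  rw [Finset.sum_congr rfl fun j _ => h j, Finset.sum_add_distrib, ← Finset.mul_sum]
  simp only [Finset.sum_ite_eq', Finset.mem_univ, if_true]
  ring

/-- Exponential decay of the killed Green's function in a coordinate direction. At distance
`≥ c₀/√α` the tilted potential `exp (-ε y_i) pot m L y` with `|ε| = c √α` is a supersolution for
the killed walk, because the gradient term costs only `O(|ε| √α / c₀) = O(c α)`; closer to the
origin the tilt is bounded and the unkilled bound suffices. -/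
lemma greenPartial_tilt_le {d : ℕ} (hd : 0 < d) {m L K c₀ C₁ c α ε : ℝ} (hK : 0 < K)
    (hL : 1 ≤ L) (hc₀ : 0 < c₀) (hC₁ : 0 < C₁)
    (hsup : ∀ x : Fin d → ℤ, nbrAvg d (pot m L) x < pot m L x)
    (hhar : ∀ (x : Fin d → ℤ) (i : Fin d), pot m L (x - Pi.single i 1) ≤ K * pot m L x ∧
        pot m L (x + Pi.single i 1) ≤ K * pot m L x)
    (hgrad : ∀ (x : Fin d → ℤ) (i : Fin d) (r : ℝ), 0 < r → r ^ 2 ≤ sqZ x →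
        |pot m L (x - Pi.single i 1) - pot m L (x + Pi.single i 1)| ≤ K / r * pot m L x)
    (hup : ∀ n (x : Fin d → ℤ), greenPartial d 1 n x ≤ C₁ * pot m L x)
    (hc : 0 < c) (hc1 : c ≤ 1) (hcK : K * (2 + 1 / c₀) * c ≤ 1)
    (hα : 0 < α) (hα1 : α < 1) (hε : |ε| = c * √α) (i : Fin d) (n : ℕ) (x : Fin d → ℤ) :
    greenPartial d (1 - α) n x ≤
      C₁ * Real.exp (c * c₀) * (Real.exp (-(ε * x i)) * pot m L x) := by
  have hpot : ∀ y : Fin d → ℤ, 0 < pot m L y := fun y =>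
    Real.rpow_pos_of_pos (by linarith [sqZ_nonneg y]) _
  have hsα : 0 < √α := Real.sqrt_pos.2 hα
  have hsq : √α * √α = α := Real.mul_self_sqrt hα.le
  have hsα1 : √α ≤ 1 := Real.sqrt_le_one.2 hα1.le
  have hε1 : |ε| ≤ 1 := by rw [hε]; nlinarith
  have hε2 : ε ^ 2 = c ^ 2 * α := by rw [← sq_abs, hε, mul_pow, Real.sq_sqrt hα.le]
  have hr : 0 < c₀ / √α := by positivity
  refine greenPartial_le hd (by linarith)
    (fun y => C₁ * Real.exp (c * c₀) * (Real.exp (-(ε * y i)) * pot m L y))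
    (fun y => by have := (hpot y).le; positivity) {y | (c₀ / √α) ^ 2 ≤ sqZ y} ?_ ?_ n x
  · intro y hy
    have hy' : (c₀ / √α) ^ 2 ≤ sqZ y := hy
    have hy0 : y ≠ 0 := by
      rintro rfl
      have h1 : 0 < (c₀ / √α) ^ 2 := by positivity
      have h2 : sqZ (0 : Fin d → ℤ) = 0 := by simp [sqZ]
      linarith
    rw [if_neg hy0, zero_add, nbrAvg_const_mul, nbrAvg_tilt]
    set p := pot m L y with hp
    have hp0 : 0 < p := hpot y
    have hm0 := (hpot (y - Pi.single i 1)).le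
    have hp0' := (hpot (y + Pi.single i 1)).le
    obtain ⟨h1, h2⟩ := hhar y i
    have h3 := hgrad y i _ hr hy'
    set a := pot m L (y - Pi.single i 1)
    set b := pot m L (y + Pi.single i 1)
    have e1 := (abs_le.1 (Real.abs_exp_sub_one_sub_id_le hε1)).2
    have e2 := (abs_le.1 (Real.abs_exp_sub_one_sub_id_le (x := -ε) (by rwa [abs_neg]))).2
    rw [neg_sq] at e2
    have t1 : (Real.exp ε - 1 - ε) * a ≤ ε ^ 2 * (K * p) :=
      mul_le_mul e1 h1 hm0 (sq_nonneg _)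
    have t2 : (Real.exp (-ε) - 1 - -ε) * b ≤ ε ^ 2 * (K * p) :=
      mul_le_mul e2 h2 hp0' (sq_nonneg _)
    have t3 : ε * (a - b) ≤ c * √α * (K / (c₀ / √α) * p) := by
      calc ε * (a - b) ≤ |ε| * |a - b| := by rw [← abs_mul]; exact le_abs_self _
        _ ≤ _ := by rw [hε]; gcongr
    have t3' : c * √α * (K / (c₀ / √α) * p) = K * (1 / c₀) * c * α * p := by
      field_simp
      rw [Real.sq_sqrt hα.le]
    have hQ : (Real.exp ε - 1) * a + (Real.exp (-ε) - 1) * b ≤ α * p := by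
      have h5 : (Real.exp ε - 1) * a + (Real.exp (-ε) - 1) * b ≤
          (K * (2 * c ^ 2 + 1 / c₀ * c)) * (α * p) := by
        rw [hε2] at t1 t2
        rw [t3'] at t3
        nlinarith
      have h6 : K * (2 * c ^ 2 + 1 / c₀ * c) ≤ 1 := by
        refine le_trans ?_ hcK
        have : c ^ 2 ≤ c := by nlinarith
        calc _ ≤ K * (2 * c + 1 / c₀ * c) := by gcongr
          _ = _ := by ring
      refine h5.trans (mul_le_of_le_one_left (by positivity) h6)
    have hd1 : (2 * d : ℝ)⁻¹ ≤ 1 := by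
      have : (1 : ℝ) ≤ d := by exact_mod_cast hd
      exact inv_le_one_of_one_le₀ (by linarith)
    have hd2 : (0 : ℝ) ≤ (2 * d : ℝ)⁻¹ := by positivity
    have hQ' : (2 * d : ℝ)⁻¹ * ((Real.exp ε - 1) * a + (Real.exp (-ε) - 1) * b) ≤ α * p :=
      (mul_le_mul_of_nonneg_left hQ hd2).trans (mul_le_of_le_one_left (by positivity) hd1)
    have hfin : (1 - α) * (nbrAvg d (pot m L) y +
        (2 * d : ℝ)⁻¹ * ((Real.exp ε - 1) * a + (Real.exp (-ε) - 1) * b)) ≤ p := by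
      calc _ ≤ (1 - α) * (p + α * p) := by
            have := (hsup y).le
            have h1α : 0 ≤ 1 - α := by linarith
            gcongr
        _ ≤ p := by nlinarith [mul_pos hp0 (mul_pos hα hα)]
    calc _ = C₁ * Real.exp (c * c₀) * (Real.exp (-(ε * y i)) * ((1 - α) * (nbrAvg d (pot m L) y +
        (2 * d : ℝ)⁻¹ * ((Real.exp ε - 1) * a + (Real.exp (-ε) - 1) * b)))) := by ring
      _ ≤ _ := by gcongr
  · intro y hy k
    have hy' : sqZ y < (c₀ / √α) ^ 2 := not_le.1 hy
    have h1 : |(y i : ℝ)| ≤ c₀ / √α :=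
      abs_le_of_sq_le_sq ((sq_le_sqZ y i).trans hy'.le) hr.le
    have h2 : ε * y i ≤ c * c₀ := by
      calc ε * y i ≤ |ε| * |(y i : ℝ)| := by rw [← abs_mul]; exact le_abs_self _
        _ ≤ c * √α * (c₀ / √α) := by rw [hε]; gcongr
        _ = _ := by field_simp
    have h3 : 1 ≤ Real.exp (c * c₀) * Real.exp (-(ε * y i)) := by
      rw [← Real.exp_add]
      exact Real.one_le_exp (by linarith)
    calc _ ≤ C₁ * pot m L y :=
          (greenPartial_le_one d k (by linarith) (by linarith) y).trans (hup k y)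
      _ ≤ C₁ * pot m L y * (Real.exp (c * c₀) * Real.exp (-(ε * y i))) :=
          le_mul_of_one_le_right (mul_pos hC₁ (hpot y)).le h3
      _ = _ := by ring

lemma exists_large_coord {d : ℕ} (hd : 0 < d) (x : Fin d → ℤ) :
    ∃ i, sqZ x ≤ d * (x i : ℝ) ^ 2 := by
  obtain ⟨i, -, hi⟩ := Finset.exists_max_image Finset.univ (fun i => (x i : ℝ) ^ 2)
    ⟨⟨0, hd⟩, Finset.mem_univ _⟩
  refine ⟨i, ?_⟩
  have := Finset.sum_le_card_nsmul Finset.univ (fun i => (x i : ℝ) ^ 2) _ hi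
  simpa [sqZ] using this

/-- For `d > 2` and `c₀ > 0` there are constants `c, C > 0` and
`α₀ ∈ (0,1)`, depending only on `d` and `c₀`, such that for all `α ∈ (0, α₀)` and all `x`
with `‖x‖ ≥ c₀/√α`: `g_α(x) ≤ C e^{−c‖x‖√α} g(x)`. -/
theorem killed_green_far_bound (d : ℕ) (hd : 2 < d) (c₀ : ℝ) (hc₀ : 0 < c₀) :
    ∃ c C α₀ : ℝ, 0 < c ∧ 0 < C ∧ α₀ ∈ Set.Ioo (0 : ℝ) 1 ∧
      ∀ α ∈ Set.Ioo (0 : ℝ) α₀, ∀ x : Fin d → ℤ, c₀ / Real.sqrt α ≤ nrmZ d x →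
        greenK d α x ≤
          ENNReal.ofReal (C * Real.exp (-(c * nrmZ d x * Real.sqrt α))) * green d x := by
  have hd0 : 0 < d := by omega
  have hdR : (2 : ℝ) < d := by exact_mod_cast hd
  obtain ⟨m, hm⟩ : ∃ m : ℝ, m = ((d : ℝ) - 2) / 2 := ⟨_, rfl⟩
  have hm0 : 0 < m := by linarith
  obtain ⟨L, K, hL, hK, hsup, hsub, hhar, hgrad⟩ := exists_pot_bounds hd hm
  have hpot : ∀ y : Fin d → ℤ, 0 < pot m L y := fun y =>
    Real.rpow_pos_of_pos (by linarith [sqZ_nonneg y]) _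
  -- Normalised so that the superharmonic potential has Laplacian at most `-1` at the origin.
  set C₁ : ℝ := (pot m L (0 : Fin d → ℤ) - nbrAvg d (pot m L) 0)⁻¹ with hC₁
  have hdiff : 0 < pot m L (0 : Fin d → ℤ) - nbrAvg d (pot m L) 0 := sub_pos.2 (hsup 0)
  have hC₁0 : 0 < C₁ := inv_pos.2 hdiff
  have hup : ∀ n (x : Fin d → ℤ), greenPartial d 1 n x ≤ C₁ * pot m L x := by
    refine greenPartial_le hd0 zero_le_one (fun x => C₁ * pot m L x)
      (fun x => (mul_pos hC₁0 (hpot x)).le) Set.univ (fun x _ => ?_) (fun x hx => by simp at hx)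
    rw [nbrAvg_const_mul]
    split_ifs with hx
    · subst hx
      have : C₁ * (pot m L (0 : Fin d → ℤ) - nbrAvg d (pot m L) 0) = 1 :=
        inv_mul_cancel₀ hdiff.ne'
      linarith
    · have := mul_lt_mul_of_pos_left (hsup x) hC₁0
      linarith
  have hs : ∀ x : Fin d → ℤ, Summable fun k => srwR d k x := fun x =>
    summable_of_sum_range_le (fun k => srwR_nonneg d k x) fun n => by
      rw [← greenPartial_one]
      exact hup n x
  obtain ⟨C₂, hC₂, hlow⟩ := exists_pot_le_greenR hd0 hm0 (by linarith) hs hsub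
  set c : ℝ := min 1 (1 / (K * (2 + 1 / c₀))) with hc
  have hc0 : 0 < c := by positivity
  have hcK : K * (2 + 1 / c₀) * c ≤ 1 := by
    calc _ ≤ K * (2 + 1 / c₀) * (1 / (K * (2 + 1 / c₀))) := by gcongr; exact min_le_right _ _
      _ = 1 := by field_simp
  refine ⟨c / √d, C₁ * Real.exp (c * c₀) * C₂, min (1 / 2) (c₀ ^ 2 / (2 * L)), by positivity,
    by positivity, ⟨by positivity, (min_le_left _ _).trans_lt (by norm_num)⟩, ?_⟩
  rintro α ⟨hα, hα0⟩ x hx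
  have hα1 : α < 1 := (hα0.trans_le (min_le_left _ _)).trans (by norm_num)
  have hα2 : α * (2 * L) < c₀ ^ 2 := by
    rw [← lt_div_iff₀ (by positivity)]
    exact hα0.trans_le (min_le_right _ _)
  have hnrm : nrmZ d x = √(sqZ x) := rfl
  have hsα : 0 < √α := Real.sqrt_pos.2 hα
  have hxL : 2 * L < sqZ x := by
    have h1 : (c₀ / √α) ^ 2 ≤ sqZ x := by
      rw [hnrm] at hx
      exact (Real.le_sqrt (by positivity) (sqZ_nonneg x)).1 hx
    rw [div_pow, Real.sq_sqrt hα.le] at h1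
    refine lt_of_lt_of_le ?_ h1
    rw [lt_div_iff₀ hα]
    linarith
  obtain ⟨i, hi⟩ := exists_large_coord hd0 x
  have hix : nrmZ d x ≤ √d * |(x i : ℝ)| := by
    rw [hnrm, ← Real.sqrt_sq_eq_abs, ← Real.sqrt_mul (by positivity)]
    exact Real.sqrt_le_sqrt hi
  -- The tilt points towards `x` along its largest coordinate.
  obtain ⟨ε, hε, hεx⟩ : ∃ ε : ℝ, |ε| = c * √α ∧ ε * x i = c * √α * |(x i : ℝ)| := by
    have hcα : 0 < c * √α := by positivity
    rcases le_total 0 (x i : ℝ) with h | h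
    · exact ⟨c * √α, abs_of_pos hcα, by rw [abs_of_nonneg h]⟩
    · exact ⟨-(c * √α), by rw [abs_neg, abs_of_pos hcα], by rw [abs_of_nonpos h]; ring⟩
  refine (greenK_le hd0 hα1.le x _ fun n => greenPartial_tilt_le hd0 hK hL hc₀ hC₁0 hsup hhar
    hgrad hup hc0 (min_le_left _ _) hcK hα hα1 hε i n x).trans ?_
  rw [green_eq_ofReal hd0 x (hs x), ← ENNReal.ofReal_mul (by positivity)]
  refine ENNReal.ofReal_le_ofReal ?_
  have hexp : Real.exp (-(ε * x i)) ≤ Real.exp (-(c / √d * nrmZ d x * √α)) := by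
    rw [hεx]
    refine Real.exp_le_exp.2 (neg_le_neg ?_)
    calc c / √d * nrmZ d x * √α ≤ c / √d * (√d * |(x i : ℝ)|) * √α := by gcongr
      _ = _ := by field_simp
  have hpp : pot m L x ≤ C₂ * greenR d x := by
    refine le_trans ?_ (hlow x)
    exact Real.rpow_le_rpow_of_nonpos (by linarith) (by linarith) (by linarith)
  calc _ ≤ C₁ * Real.exp (c * c₀) *
        (Real.exp (-(c / √d * nrmZ d x * √α)) * (C₂ * greenR d x)) := by
        gcongr
        exact (hpot x).le
    _ = _ := by ring
end
end

section
/- Let d > 4 be an integer. (i) There exist constants 0 < c ≤ C, depending only on d, such that for all x ∈ ℤ^d: c·(g⋆g)(x) ≤ Σ_{k≥1} k·P(X_k = x) ≤ C·(g⋆g)(x); consequently, for every α ∈ (0,1), Σ_{k≥1} k·(1−α)^k·P(X_k = x) ≤ C·(g⋆g)(x). (ii) For every c₀ > 0 there exist constants c₁ > 0, C′ > 0 and α₀ ∈ (0,1), depending only on d and c₀, such that for all α ∈ (0, α₀) and all x ∈ ℤ^d with ‖x‖ ≥ c₀/√α: Σ_{k≥1} k·(1−α)^k·P(X_k = x) ≤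 C′·e^{−c₁·‖x‖·√α}·(g⋆g)(x). -/
/-!
The Chapman–Kolmogorov equation gives `(g⋆g)(x) = ∑ (k + 1) P(X_k = x)` (`convE_green`), so the
first part reduces to comparing the weights `k` and `k + 1`; the term `k = 0` is nonzero only at
`x = 0`, where it is controlled by the return probability at time two (`part_one`).

For the second part let `m` be the sup norm of `x`. The proof compares a lower bound `c m^{4-d}` for
`g⋆g` with an upper bound `C e^{-c₁ √α ‖x‖} m^{4-d}` for the killed sum. Both come from the walk in
continuous time, whose coordinates are independent (`heat_eq_prod`): the Poissonized kernel
`heat d s x` is the product over `i` of the laws at `x i` of the difference of two independent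
Poisson variables of mean `s`. This is proved on the level of exponential generating functions,
where path counts and products of one-dimensional path counts satisfy the same differential
equation. Integrating in time returns to the discrete sums (`lintegral_heat`): up to the factor
`(2d)²`, the integral of `s * heat d s x` is `g⋆g`, and with the extra factor `e^{-2dαs}` it bounds
the killed sum.

Stirling's formula shows that Poisson weights of mean `μ` are at most `1 / √μ`, and at least a
multiple of it just above the mean. Hence `heat` is of order at least `m^{-d}` for `s` in
`[m², 2m²]`, which yields `le_convE_green`. In the other direction, exponential tilting (`skellam_le`)
gives `heat ≤ s^{-d/2}` and an additional decay `exp (-(m / 2) min (1, m / (4s)))`. For `s ≤ m²`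
this decay together with the killing produces `m^{-d} e^{-√α m / 4}` (`small_time`). For `s ≥ m²`
the killing alone gives `e^{-α m²}`, which is small enough because `√α ‖x‖ ≥ c₀`, and the integral of
`s^{1 - d/2}` converges because `d > 4` (`lintegral_tail`).
-/

open Filter

noncomputable section

/-! ### Convolution and the first part -/

lemma tsum_antidiag (F : ℕ → ℕ → ENNReal) :
    ∑' a, ∑' b, F a b = ∑' n, ∑ p ∈ Finset.HasAntidiagonal.antidiagonal n, F p.1 p.2 := by
  rw [← ENNReal.tsum_prod, ← Finset.HasAntidiagonal.sigmaAntidiagonalEquivProd.tsum_eq, ENNReal.tsum_sigma']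
  refine tsum_congr fun n => ?_
  rw [← Finset.tsum_subtype (Finset.HasAntidiagonal.antidiagonal n) (fun p => F p.1 p.2)]
  rfl

lemma tsum_shift (d : ℕ) (f h : (Fin d → ℤ) → ENNReal) (x e : Fin d → ℤ) :
    ∑' y, f (y - e) * h (x - y) = ∑' y, f y * h (x - e - y) := by
  rw [← (Equiv.addRight e).tsum_eq]
  refine tsum_congr fun y => ?_
  simp only [Equiv.coe_addRight, add_sub_cancel_right]
  congr 2; abel

/-- The Chapman–Kolmogorov equation. -/
lemma srwP_add (d : ℕ) (j k : ℕ) (x : Fin d → ℤ) :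
    ∑' y, srwP d j y * srwP d k (x - y) = srwP d (j + k) x := by
  induction j generalizing x with
  | zero =>
    rw [tsum_eq_single 0]
    · simp [srwP]
    · intro y hy; simp [srwP, hy]
  | succ j ih =>
    rw [show j + 1 + k = (j + k) + 1 by ring]
    simp only [srwP, mul_assoc]
    rw [ENNReal.tsum_mul_left]
    congr 1
    simp only [Finset.sum_mul, add_mul]
    rw [Summable.tsum_finsetSum (fun _ _ => ENNReal.summable)]
    refine Finset.sum_congr rfl fun i _ => ?_
    rw [ENNReal.tsum_add, tsum_shift, ih]
    have := tsum_shift d (srwP d j) (srwP d k) x (-Pi.single i 1)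
    simp only [sub_neg_eq_add] at this
    rw [this, ih]

/-- A time `k` splits in `k + 1` ways into the two times of the Green's functions. -/
lemma convE_green (d : ℕ) (x : Fin d → ℤ) :
    convE d (green d) (green d) x = ∑' k : ℕ, ((k : ENNReal) + 1) * srwP d k x := by
  have h : convE d (green d) (green d) x
      = ∑' j, ∑' k, ∑' y, srwP d j y * srwP d k (x - y) := by
    unfold convE green
    simp_rw [← ENNReal.tsum_mul_right, ← ENNReal.tsum_mul_left]
    rw [ENNReal.tsum_comm]
    exact tsum_congr fun j => ENNReal.tsum_comm
  rw [h]
  simp_rw [srwP_add]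
  rw [tsum_antidiag (fun j k => srwP d (j + k) x)]
  refine tsum_congr fun n => ?_
  rw [Finset.sum_congr rfl (g := fun _ => srwP d n x)]
  · simp
  · intro p hp; rw [Finset.HasAntidiagonal.mem_antidiagonal.1 hp]

/-- Since `g⋆g = ∑ (k + 1) P(X_k = x)`, only the term `k = 0` needs an argument; it vanishes for
`x ≠ 0`, and for `x = 0` it is at most `d` times the term `k = 2` of `∑ k P(X_k = x)`. -/
lemma part_one (d : ℕ) (hd : 4 < d) :
    ∃ c C : ℝ, 0 < c ∧ c ≤ C ∧ ∀ x : Fin d → ℤ,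
      (ENNReal.ofReal c * convE d (green d) (green d) x ≤
          ∑' k : ℕ, (k : ENNReal) * srwP d k x ∧
        ∑' k : ℕ, (k : ENNReal) * srwP d k x ≤
          ENNReal.ofReal C * convE d (green d) (green d) x) ∧
      ∀ α ∈ Set.Ioo (0 : ℝ) 1,
        ∑' k : ℕ, (k : ENNReal) * ENNReal.ofReal ((1 - α) ^ k) * srwP d k x ≤
          ENNReal.ofReal C * convE d (green d) (green d) x := by
  have hup : ∀ x, ∑' k : ℕ, (k : ENNReal) * srwP d k x ≤ convE d (green d) (green d) x := by
    intro x
    rw [convE_green]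
    exact ENNReal.tsum_le_tsum fun k => mul_le_mul_left le_self_add _
  have hd0 : (d : ENNReal) ≠ 0 := by simp; omega
  -- The walk returns to its starting point at time two with probability `1 / (2d)`.
  have h2 : (1 : ENNReal) ≤ d * ((2 : ℕ) * srwP d 2 0) := by
    have h1 : ∀ i : Fin d, (2 * d : ENNReal)⁻¹ ≤ srwP d 1 (0 - Pi.single i 1) := by
      intro i
      simp only [srwP]
      refine le_mul_of_one_le_right zero_le ?_
      calc (1 : ENNReal) ≤ (if (0 - Pi.single i 1 - Pi.single i 1 : Fin d → ℤ) = 0 then 1 else 0) +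
            (if (0 - Pi.single i 1 + Pi.single i 1 : Fin d → ℤ) = 0 then 1 else 0) := by simp
        _ ≤ _ := Finset.single_le_sum (f := fun j : Fin d =>
            ((if (0 - Pi.single i 1 - Pi.single j 1 : Fin d → ℤ) = 0 then 1 else 0) +
            (if (0 - Pi.single i 1 + Pi.single j 1 : Fin d → ℤ) = 0 then 1 else 0) : ENNReal))
            (fun _ _ => zero_le) (Finset.mem_univ i)
    have h1' : ∀ i : Fin d, (2 * d : ENNReal)⁻¹ ≤ srwP d 1 (0 + Pi.single i 1) := by
      intro i
      simp only [srwP]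
      refine le_mul_of_one_le_right zero_le ?_
      calc (1 : ENNReal) ≤ (if (0 + Pi.single i 1 - Pi.single i 1 : Fin d → ℤ) = 0 then 1 else 0) +
            (if (0 + Pi.single i 1 + Pi.single i 1 : Fin d → ℤ) = 0 then 1 else 0) := by simp
        _ ≤ _ := Finset.single_le_sum (f := fun j : Fin d =>
            ((if (0 + Pi.single i 1 - Pi.single j 1 : Fin d → ℤ) = 0 then 1 else 0) +
            (if (0 + Pi.single i 1 + Pi.single j 1 : Fin d → ℤ) = 0 then 1 else 0) : ENNReal))
            (fun _ _ => zero_le) (Finset.mem_univ i)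
    have h3 : (2 * d : ENNReal)⁻¹ ≤ srwP d 2 0 := by
      rw [srwP]
      refine le_mul_of_one_le_right zero_le ?_
      calc (1 : ENNReal) = ∑ i : Fin d, ((2 * d : ENNReal)⁻¹ + (2 * d : ENNReal)⁻¹) := by
            rw [Finset.sum_const, Finset.card_univ, Fintype.card_fin, nsmul_eq_mul, ← two_mul,
              ← mul_assoc, mul_comm (d : ENNReal) 2, ENNReal.mul_inv_cancel]
            · exact mul_ne_zero two_ne_zero hd0
            · exact ENNReal.mul_ne_top (by simp) (by simp)
        _ ≤ _ := Finset.sum_le_sum fun i _ => add_le_add (h1 i) (h1' i)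
    calc (1 : ENNReal) = d * ((2 : ℕ) * (2 * d : ENNReal)⁻¹) := by
          push_cast
          rw [← mul_assoc, mul_comm (d : ENNReal) 2, ENNReal.mul_inv_cancel]
          · exact mul_ne_zero two_ne_zero hd0
          · exact ENNReal.mul_ne_top (by simp) (by simp)
      _ ≤ _ := by gcongr
  have hlow : ∀ x, convE d (green d) (green d) x ≤
      ((d + 2 : ℕ) : ENNReal) * ∑' k : ℕ, (k : ENNReal) * srwP d k x := by
    intro x
    rw [convE_green, tsum_eq_zero_add' ENNReal.summable]
    have hA : srwP d 0 x ≤ d * ∑' k : ℕ, (k : ENNReal) * srwP d k x := by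
      by_cases hx : x = 0
      · subst hx
        calc srwP d 0 0 = 1 := by simp [srwP]
          _ ≤ _ := h2
          _ ≤ _ := by
            gcongr
            exact ENNReal.le_tsum (f := fun k : ℕ => (k : ENNReal) * srwP d k 0) 2
      · simp [srwP, hx]
    have hB : ∑' k : ℕ, (((k + 1 : ℕ) : ENNReal) + 1) * srwP d (k + 1) x ≤
        2 * ∑' k : ℕ, (k : ENNReal) * srwP d k x := by
      rw [tsum_eq_zero_add' (f := fun k : ℕ => (k : ENNReal) * srwP d k x) ENNReal.summable]
      simp only [Nat.cast_zero, zero_mul, zero_add]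
      rw [← ENNReal.tsum_mul_left]
      refine ENNReal.tsum_le_tsum fun k => ?_
      rw [← mul_assoc]
      gcongr
      push_cast
      rw [two_mul]
      gcongr
      exact le_add_self
    calc _ ≤ d * (∑' k : ℕ, (k : ENNReal) * srwP d k x)
          + 2 * ∑' k : ℕ, (k : ENNReal) * srwP d k x := by
          refine add_le_add ?_ hB
          simpa using hA
      _ = _ := by push_cast; ring
  refine ⟨1 / (d + 2), 1, by positivity, ?_, fun x => ⟨⟨?_, ?_⟩, fun α hα => ?_⟩⟩
  · rw [div_le_one (by positivity)]; linarith [(Nat.cast_nonneg d : (0 : ℝ) ≤ d)]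
  · calc _ ≤ ENNReal.ofReal (1 / (d + 2)) *
          (((d + 2 : ℕ) : ENNReal) * ∑' k : ℕ, (k : ENNReal) * srwP d k x) := by
          gcongr; exact hlow x
      _ = _ := by
        rw [← mul_assoc, ← ENNReal.ofReal_natCast, ← ENNReal.ofReal_mul (by positivity)]
        push_cast
        rw [one_div, inv_mul_cancel₀ (by positivity)]
        simp
  · simpa using hup x
  · rw [ENNReal.ofReal_one, one_mul]
    refine le_trans (ENNReal.tsum_le_tsum fun k => ?_) (hup x)
    gcongr
    refine mul_le_of_le_one_right zero_le ?_
    rw [ENNReal.ofReal_le_one]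
    exact pow_le_one₀ (by linarith [hα.2]) (by linarith [hα.1])

/-! ### The product formula for the Poissonized walk -/

/-- Evaluation of a formal power series with coefficients in `[0,∞]`, as a monoid homomorphism. -/
def evalPS (s : ENNReal) : PowerSeries ENNReal →* ENNReal where
  toFun f := ∑' k, PowerSeries.coeff k f * s ^ k
  map_one' := by
    rw [tsum_eq_single 0]
    · simp
    · intro k hk; simp [PowerSeries.coeff_one, hk]
  map_mul' f g := by
    simp_rw [← ENNReal.tsum_mul_right, ← ENNReal.tsum_mul_left]
    rw [tsum_antidiag (fun a b => PowerSeries.coeff a f * s ^ a * (PowerSeries.coeff b g * s ^ b))]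
    refine tsum_congr fun n => ?_
    rw [PowerSeries.coeff_mul, Finset.sum_mul]
    refine Finset.sum_congr rfl fun p hp => ?_
    rw [← Finset.HasAntidiagonal.mem_antidiagonal.1 hp, pow_add]
    ring

/-- The exponential generating function of the number of nearest-neighbour paths in `ℤ` from `0`
to `n`: the coefficient of `T^k` is the sum of `1 / (a! b!)` over the numbers `a`, `b` of up- and
down-steps with `a + b = k` and `a - b = n`. -/
def lineSeries (n : ℤ) : PowerSeries ENNReal :=
  PowerSeries.mk fun k => ∑ p ∈ Finset.HasAntidiagonal.antidiagonal k,
    if (p.1 : ℤ) - p.2 = n then ((p.1.factorial : ENNReal))⁻¹ * ((p.2.factorial : ENNReal))⁻¹ else 0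

lemma inv_fact_succ (a : ℕ) :
    ((a : ENNReal) + 1) * (((a + 1).factorial : ENNReal))⁻¹ = ((a.factorial : ENNReal))⁻¹ := by
  rw [Nat.factorial_succ]
  push_cast
  rw [ENNReal.mul_inv (by simp) (by simp), ← mul_assoc, ENNReal.mul_inv_cancel (by simp) (by
    simp [ENNReal.add_eq_top]), one_mul]

lemma lineSeries_deriv (n : ℤ) :
    PowerSeries.derivative ENNReal (lineSeries n) = lineSeries (n - 1) + lineSeries (n + 1) := by
  ext k
  rw [PowerSeries.coeff_derivative, map_add]
  simp only [lineSeries, PowerSeries.coeff_mk]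
  set F : ℕ × ℕ → ENNReal := fun p => if (p.1 : ℤ) - p.2 = n then
    ((p.1.factorial : ENNReal))⁻¹ * ((p.2.factorial : ENNReal))⁻¹ else 0 with hF
  have h1 : (∑ p ∈ Finset.HasAntidiagonal.antidiagonal (k + 1), F p) * ((k : ENNReal) + 1)
      = ∑ p ∈ Finset.HasAntidiagonal.antidiagonal (k + 1), (p.1 : ENNReal) * F p
        + ∑ p ∈ Finset.HasAntidiagonal.antidiagonal (k + 1), (p.2 : ENNReal) * F p := by
    rw [← Finset.sum_add_distrib, Finset.sum_mul]
    refine Finset.sum_congr rfl fun p hp => ?_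
    have : ((k : ENNReal) + 1) = p.1 + p.2 := by
      have := Finset.HasAntidiagonal.mem_antidiagonal.1 hp
      exact_mod_cast this.symm
    rw [this]; ring
  rw [h1, Finset.Nat.sum_antidiagonal_succ, Finset.Nat.sum_antidiagonal_succ']
  simp only [Nat.cast_zero, zero_mul, zero_add]
  congr 1
  · refine Finset.sum_congr rfl fun p _ => ?_
    simp only [hF]
    by_cases h : ((p.1 : ℤ)) - p.2 = n - 1
    · rw [if_pos h, if_pos (by push_cast; linarith), ← mul_assoc, Nat.cast_succ, inv_fact_succ]
    · rw [if_neg h, if_neg (by push_cast; intro h'; apply h; linarith), mul_zero]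
  · refine Finset.sum_congr rfl fun p _ => ?_
    simp only [hF]
    by_cases h : ((p.1 : ℤ)) - p.2 = n + 1
    · rw [if_pos h, if_pos (by push_cast; linarith), mul_left_comm, Nat.cast_succ, inv_fact_succ]
    · rw [if_neg h, if_neg (by push_cast; intro h'; apply h; linarith), mul_zero]

lemma derivation_prod {ι : Type*} [DecidableEq ι] (s : Finset ι) (f : ι → PowerSeries ENNReal) :
    PowerSeries.derivative ENNReal (∏ i ∈ s, f i) =
      ∑ i ∈ s, (∏ j ∈ s.erase i, f j) * PowerSeries.derivative ENNReal (f i) := by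
  induction s using Finset.induction_on with
  | empty => simp
  | insert a s ha ih =>
    rw [Finset.prod_insert ha, Derivation.leibniz, ih, Finset.sum_insert ha,
      Finset.erase_insert ha, smul_eq_mul, smul_eq_mul, add_comm, Finset.mul_sum]
    congr 1
    refine Finset.sum_congr rfl fun i hi => ?_
    have hne : i ≠ a := fun h => ha (h ▸ hi)
    rw [Finset.erase_insert_of_ne hne.symm, Finset.prod_insert (by simp [ha]), mul_assoc]

lemma prodSeries_deriv (d : ℕ) (x : Fin d → ℤ) :
    PowerSeries.derivative ENNReal (∏ i, lineSeries (x i)) =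
      ∑ i, ((∏ j, lineSeries ((x - Pi.single i 1 : Fin d → ℤ) j)) +
        ∏ j, lineSeries ((x + Pi.single i 1 : Fin d → ℤ) j)) := by
  rw [derivation_prod]
  refine Finset.sum_congr rfl fun i _ => ?_
  have h : ∀ y : Fin d → ℤ, ∏ j, lineSeries (y j) =
      (∏ j ∈ Finset.univ.erase i, lineSeries (y j)) * lineSeries (y i) := fun y =>
    (Finset.prod_erase_mul _ _ (Finset.mem_univ i)).symm
  rw [lineSeries_deriv, mul_add, h (x - Pi.single i 1), h (x + Pi.single i 1)]
  simp only [Pi.sub_apply, Pi.add_apply, Pi.single_eq_same]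
  congr 2
  · refine Finset.prod_congr rfl fun j hj => ?_
    rw [Pi.single_eq_of_ne (Finset.ne_of_mem_erase hj), sub_zero]
  · refine Finset.prod_congr rfl fun j hj => ?_
    rw [Pi.single_eq_of_ne (Finset.ne_of_mem_erase hj), add_zero]

/-- Both sides, as functions of `k` and `x`, solve the same recursion in `k`: it is the definition
for the walk, and the differential equation of the generating functions for the product. -/
lemma coeff_prodSeries (d : ℕ) (hd : 0 < d) (k : ℕ) (x : Fin d → ℤ) :
    PowerSeries.coeff k (∏ i, lineSeries (x i)) * (k.factorial : ENNReal)
      = (2 * d : ENNReal) ^ k * srwP d k x := by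
  induction k generalizing x with
  | zero =>
    rw [PowerSeries.coeff_zero_eq_constantCoeff_apply, map_prod]
    have : ∀ n : ℤ, PowerSeries.constantCoeff (lineSeries n) = if n = 0 then 1 else 0 := by
      intro n
      rw [← PowerSeries.coeff_zero_eq_constantCoeff_apply]
      simp [lineSeries, eq_comm]
    simp only [this, srwP, Finset.prod_ite_zero]
    simp [funext_iff]
  | succ k ih =>
    have h := congrArg (PowerSeries.coeff k) (prodSeries_deriv d x)
    rw [PowerSeries.coeff_derivative] at h
    rw [Nat.factorial_succ]
    push_cast
    rw [← mul_assoc, h, map_sum, Finset.sum_mul]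
    simp only [map_add, add_mul, ih, ← mul_add]
    rw [← Finset.mul_sum, srwP, pow_succ, mul_assoc, ← mul_assoc (2 * d : ENNReal) _ _,
      ENNReal.mul_inv_cancel, one_mul]
    · exact mul_ne_zero two_ne_zero (by simp; omega)
    · exact ENNReal.mul_ne_top (by simp) (by simp)

/-- The Poisson weight `e^{-μ} μ^k / k!`. -/
def pois (μ : ℝ) (k : ℕ) : ℝ := Real.exp (-μ) * μ ^ k / k.factorial

/-- The probability that the difference of two independent Poisson variables of mean `s`
equals `n`. -/
def skellam (s : ℝ) (n : ℤ) : ENNReal :=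
  ∑' a : ℕ, ∑' b : ℕ, if (a : ℤ) - b = n then ENNReal.ofReal (pois s a * pois s b) else 0

/-- The law at time `2 d s` of the simple random walk run at the jumps of a rate one Poisson
process. -/
def heat (d : ℕ) (s : ℝ) (x : Fin d → ℤ) : ENNReal :=
  ∑' k : ℕ, ENNReal.ofReal (pois (2 * d * s) k) * srwP d k x

lemma evalPS_lineSeries (s : ℝ) (hs : 0 ≤ s) (n : ℤ) :
    ENNReal.ofReal (Real.exp (-(2 * s))) * evalPS (ENNReal.ofReal s) (lineSeries n) = skellam s n := by
  unfold skellam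
  rw [tsum_antidiag (fun a b => if (a : ℤ) - b = n then
    ENNReal.ofReal (pois s a * pois s b) else 0)]
  change _ * ∑' k, PowerSeries.coeff k (lineSeries n) * (ENNReal.ofReal s) ^ k = _
  rw [← ENNReal.tsum_mul_left]
  refine tsum_congr fun k => ?_
  simp only [lineSeries, PowerSeries.coeff_mk]
  rw [Finset.sum_mul, Finset.mul_sum]
  refine Finset.sum_congr rfl fun p hp => ?_
  split_ifs with h
  · rw [← Finset.HasAntidiagonal.mem_antidiagonal.1 hp]
    have hf : ∀ a : ℕ, ((a.factorial : ENNReal))⁻¹ = ENNReal.ofReal ((a.factorial : ℝ)⁻¹) := by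
      intro a
      rw [ENNReal.ofReal_inv_of_pos (by positivity), ENNReal.ofReal_natCast]
    rw [hf, hf, ← ENNReal.ofReal_pow hs, ← ENNReal.ofReal_mul (by positivity),
      ← ENNReal.ofReal_mul (by positivity), ← ENNReal.ofReal_mul (by positivity)]
    congr 1
    unfold pois
    rw [show -(2 * s) = -s + -s by ring, Real.exp_add, pow_add]
    field_simp
  · simp

/-- After Poissonization the coordinates of the walk are independent. -/
lemma heat_eq_prod (d : ℕ) (hd : 0 < d) (s : ℝ) (hs : 0 ≤ s) (x : Fin d → ℤ) :
    heat d s x = ∏ i, skellam s (x i) := by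
  simp_rw [← evalPS_lineSeries s hs]
  rw [Finset.prod_mul_distrib, ← map_prod, Finset.prod_const, Finset.card_univ, Fintype.card_fin]
  change _ = _ * ∑' k, PowerSeries.coeff k (∏ i, lineSeries (x i)) * (ENNReal.ofReal s) ^ k
  unfold heat
  rw [← ENNReal.tsum_mul_left]
  refine tsum_congr fun k => ?_
  have h := coeff_prodSeries d hd k x
  have hc : PowerSeries.coeff k (∏ i, lineSeries (x i)) =
      (2 * d : ENNReal) ^ k * srwP d k x * ((k.factorial : ENNReal))⁻¹ := by
    rw [← h, mul_assoc, ENNReal.mul_inv_cancel (by positivity) (by simp), mul_one]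
  rw [hc]
  have hf : ((k.factorial : ENNReal))⁻¹ = ENNReal.ofReal ((k.factorial : ℝ)⁻¹) := by
    rw [ENNReal.ofReal_inv_of_pos (by positivity), ENNReal.ofReal_natCast]
  have h2d : (2 * d : ENNReal) = ENNReal.ofReal (2 * d) := by
    rw [ENNReal.ofReal_mul (by positivity), ENNReal.ofReal_natCast]; simp
  rw [hf, h2d, ← ENNReal.ofReal_pow (by positivity), ← ENNReal.ofReal_pow hs,
    ← ENNReal.ofReal_pow (by positivity)]
  have : pois (2 * d * s) k = Real.exp (-(2 * s)) ^ d * ((2 * d) ^ k * (k.factorial : ℝ)⁻¹ * s ^ k) := by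
    unfold pois
    rw [← Real.exp_nat_mul, mul_pow (2 * (d : ℝ)) s k]
    rw [show (d : ℝ) * -(2 * s) = -(2 * d * s) by ring]
    field_simp
  rw [this, ENNReal.ofReal_mul (by positivity), ENNReal.ofReal_mul (by positivity),
    ENNReal.ofReal_mul (by positivity)]
  ring

/-! ### Bounds for Poisson weights -/

lemma pois_nonneg {μ : ℝ} (hμ : 0 ≤ μ) (k : ℕ) : 0 ≤ pois μ k := by unfold pois; positivity

lemma tsum_pois {μ : ℝ} (hμ : 0 ≤ μ) : ∑' k, ENNReal.ofReal (pois μ k) = 1 := by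
  have h := ProbabilityTheory.hasSum_one_poissonMeasure ⟨μ, hμ⟩
  change HasSum (fun k => pois μ k) 1 at h
  rw [← ENNReal.ofReal_tsum_of_nonneg (pois_nonneg hμ) h.summable, h.tsum_eq]
  simp

lemma pois_le_one {μ : ℝ} (hμ : 0 ≤ μ) (k : ℕ) : pois μ k ≤ 1 := by
  have h := ENNReal.le_tsum (f := fun k => ENNReal.ofReal (pois μ k)) k
  rw [tsum_pois hμ] at h
  simpa using h

lemma pois_le_of_half_le {μ : ℝ} (hμ : 0 < μ) (k : ℕ) (hk : μ / 2 ≤ k) :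
    pois μ k ≤ 1 / √μ := by
  have hk0 : (0 : ℝ) < k := by linarith
  have hst := Stirling.le_factorial_stirling k
  have h1 : √μ ≤ √(2 * Real.pi * k) := by
    apply Real.sqrt_le_sqrt
    nlinarith [Real.pi_gt_three]
  have h2 : (μ / k) ^ k ≤ Real.exp (μ - k) := by
    calc (μ / k) ^ k ≤ (Real.exp (μ / k - 1)) ^ k := by
          gcongr
          linarith [Real.add_one_le_exp (μ / k - 1)]
      _ = Real.exp (μ - k) := by
          rw [← Real.exp_nat_mul]; congr 1; field_simp
  have hsq : 0 < √μ := Real.sqrt_pos.2 hμ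
  unfold pois
  rw [div_le_div_iff₀ (by positivity) hsq, one_mul]
  refine le_trans ?_ hst
  have h3 : μ ^ k = (μ / k) ^ k * (k : ℝ) ^ k := by rw [div_pow]; field_simp
  calc Real.exp (-μ) * μ ^ k * √μ
      ≤ Real.exp (-μ) * (Real.exp (μ - k) * (k : ℝ) ^ k) * √(2 * Real.pi * k) := by
        rw [h3]; gcongr
    _ = √(2 * Real.pi * k) * (Real.exp (-k) * (k : ℝ) ^ k) := by
        rw [show -(k : ℝ) = -μ + (μ - k) by ring, Real.exp_add]; ring
    _ = _ := by
        rw [div_pow, ← Real.exp_nat_mul, mul_one, Real.exp_neg]; field_simp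

/-- The weights increase up to the mode `⌊μ⌋`, so the bound near the mode is global. -/
lemma pois_le {μ : ℝ} (hμ : 0 < μ) (k : ℕ) : pois μ k ≤ 1 / √μ := by
  by_cases h1 : μ < 1
  · refine (pois_le_one hμ.le k).trans ?_
    rw [le_div_iff₀ (Real.sqrt_pos.2 hμ), one_mul]
    exact Real.sqrt_le_one.2 h1.le
  push Not at h1
  have hfl : μ / 2 ≤ ⌊μ⌋₊ := by
    have h2 : (1 : ℝ) ≤ ⌊μ⌋₊ := by exact_mod_cast Nat.le_floor (by simpa using h1)
    linarith [Nat.lt_floor_add_one μ]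
  by_cases hk : ⌊μ⌋₊ ≤ k
  · exact pois_le_of_half_le hμ k (hfl.trans (by exact_mod_cast hk))
  push Not at hk
  refine le_trans ?_ (pois_le_of_half_le hμ _ hfl)
  have hstep : ∀ j : ℕ, j + 1 ≤ ⌊μ⌋₊ → pois μ j ≤ pois μ (j + 1) := by
    intro j hj
    have hj' : ((j : ℝ) + 1) ≤ μ := by
      have := (Nat.le_floor_iff hμ.le).1 hj
      exact_mod_cast this
    unfold pois
    rw [Nat.factorial_succ, div_le_div_iff₀ (by positivity) (by positivity), pow_succ]
    push_cast
    have : 0 ≤ Real.exp (-μ) * μ ^ j * (j.factorial : ℝ) := by positivity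
    nlinarith
  obtain ⟨m, hm⟩ := Nat.exists_eq_add_of_lt hk
  have hind : ∀ i : ℕ, k + i ≤ ⌊μ⌋₊ → pois μ k ≤ pois μ (k + i) := by
    intro i
    induction i with
    | zero => intro _; simp
    | succ i ih => intro h; exact (ih (by omega)).trans (hstep (k + i) (by omega))
  have := hind (m + 1) (by omega)
  rwa [show k + (m + 1) = ⌊μ⌋₊ by omega] at this

lemma factorial_le_stirling (k : ℕ) (hk : 1 ≤ k) :
    (k.factorial : ℝ) ≤ Real.exp 1 * √k * (k / Real.exp 1) ^ k := by
  obtain ⟨n, rfl⟩ := Nat.exists_eq_add_of_le' hk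
  have h := Stirling.stirlingSeq'_antitone (Nat.zero_le n)
  simp only [Function.comp, Nat.succ_eq_add_one, zero_add, Stirling.stirlingSeq_one] at h
  unfold Stirling.stirlingSeq at h
  rw [div_le_iff₀ (by positivity), Real.sqrt_mul (by norm_num)] at h
  refine h.trans (le_of_eq ?_)
  field_simp

/-- Within three standard deviations above the mean, the weights are of order `1 / √μ`. -/
lemma le_pois {μ : ℝ} (hμ : 1 ≤ μ) (k : ℕ) (h1 : μ ≤ k) (h2 : (k : ℝ) ≤ μ + 3 * √μ) :
    Real.exp (-10) / (2 * √μ) ≤ pois μ k := by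
  have hμ0 : 0 < μ := by linarith
  have hk0 : (0 : ℝ) < k := by linarith
  have hk1 : 1 ≤ k := by exact_mod_cast (Nat.cast_pos.1 hk0)
  have hsq : 0 < √μ := Real.sqrt_pos.2 hμ0
  have hsq2 : √μ * √μ = μ := Real.mul_self_sqrt hμ0.le
  have hsq1 : 1 ≤ √μ := Real.one_le_sqrt.2 hμ
  have hkk : √(k : ℝ) ≤ 2 * √μ := by
    rw [show 2 * √μ = √(4 * μ) by
      rw [Real.sqrt_mul (by norm_num), show (4 : ℝ) = 2 ^ 2 by norm_num,
        Real.sqrt_sq (by norm_num)]]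
    apply Real.sqrt_le_sqrt
    nlinarith
  have hpow : (k : ℝ) ^ k ≤ Real.exp (k * (k - μ) / μ) * μ ^ k := by
    have : ((k : ℝ) / μ) ^ k ≤ Real.exp (k * (k - μ) / μ) := by
      calc ((k : ℝ) / μ) ^ k ≤ (Real.exp (k / μ - 1)) ^ k := by
            gcongr
            linarith [Real.add_one_le_exp ((k : ℝ) / μ - 1)]
        _ = _ := by rw [← Real.exp_nat_mul]; congr 1; field_simp
    rw [div_pow, div_le_iff₀ (by positivity)] at this
    exact this
  have hexp : (-10 : ℝ) + k * (k - μ) / μ ≤ -μ - 1 + k := by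
    have h3 : (k - μ) ^ 2 / μ ≤ 9 := by
      rw [div_le_iff₀ hμ0]
      nlinarith
    have : (k : ℝ) * (k - μ) / μ = (k - μ) ^ 2 / μ + (k - μ) := by field_simp; ring
    linarith
  unfold pois
  rw [div_le_div_iff₀ (by positivity) (by positivity)]
  calc Real.exp (-10) * (k.factorial : ℝ)
      ≤ Real.exp (-10) * (Real.exp 1 * √k * (k / Real.exp 1) ^ k) := by
        gcongr; exact factorial_le_stirling k hk1
    _ = Real.exp (-10) * Real.exp 1 * √k * (k : ℝ) ^ k * Real.exp (-k) := by
        rw [div_pow, ← Real.exp_nat_mul, mul_one, Real.exp_neg (k : ℝ)]; field_simp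
    _ ≤ Real.exp (-10) * Real.exp 1 * (2 * √μ) * (Real.exp (k * (k - μ) / μ) * μ ^ k)
          * Real.exp (-k) := by gcongr
    _ = Real.exp (-10 + k * (k - μ) / μ) * (Real.exp 1 * (2 * √μ) * μ ^ k * Real.exp (-k)) := by
        rw [Real.exp_add]; ring
    _ ≤ Real.exp (-μ - 1 + k) * (Real.exp 1 * (2 * √μ) * μ ^ k * Real.exp (-k)) := by gcongr
    _ = Real.exp (-μ) * μ ^ k * (2 * √μ) := by
        have h5 : Real.exp (-μ) = Real.exp (-μ - 1 + k) * Real.exp 1 * Real.exp (-k) := by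
          rw [← Real.exp_add, ← Real.exp_add]; congr 1; ring
        rw [h5]; ring

/-! ### The one-dimensional kernel -/

lemma skellam_neg (s : ℝ) (n : ℤ) : skellam s (-n) = skellam s n := by
  unfold skellam
  rw [ENNReal.tsum_comm]
  refine tsum_congr fun b => tsum_congr fun a => ?_
  rw [mul_comm]
  exact if_congr (by constructor <;> intro h <;> linarith) rfl rfl

lemma skellam_natAbs (s : ℝ) (n : ℤ) : skellam s n = skellam s n.natAbs := by
  rcases Int.natAbs_eq n with h | h
  · rw [← h]
  · conv_lhs => rw [h, skellam_neg]

lemma skellam_nat (s : ℝ) (n : ℕ) :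
    skellam s n = ∑' b : ℕ, ENNReal.ofReal (pois s (b + n) * pois s b) := by
  unfold skellam
  rw [ENNReal.tsum_comm]
  refine tsum_congr fun b => ?_
  rw [tsum_eq_single (b + n)]
  · rw [if_pos (by push_cast; ring)]
  · intro a ha
    rw [if_neg]
    intro h
    apply ha
    omega

/-- Exponential tilting: the weights with both means `s` are compared with the weights with means
`s e^l` and `s e^{-l}`. -/
lemma skellam_le (s : ℝ) (hs : 0 < s) (l : ℝ) (hl : 0 ≤ l) (n : ℤ) :
    skellam s n ≤ ENNReal.ofReal
      (min 1 (1 / √s) * Real.exp (2 * s * (Real.cosh l - 1) - l * n.natAbs)) := by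
  rw [skellam_natAbs, skellam_nat]
  set N := n.natAbs
  have htilt : ∀ b : ℕ, pois s (b + N) * pois s b =
      Real.exp (2 * s * (Real.cosh l - 1) - l * N) *
        (pois (s * Real.exp l) (b + N) * pois (s * Real.exp (-l)) b) := by
    intro b
    unfold pois
    have h1 : Real.exp (2 * s * (Real.cosh l - 1) - l * N) =
        Real.exp (s * Real.exp l) * Real.exp (s * Real.exp (-l)) * Real.exp (-s) * Real.exp (-s)
          * Real.exp (-l * N) := by
      rw [← Real.exp_add, ← Real.exp_add, ← Real.exp_add, ← Real.exp_add, Real.cosh_eq]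
      congr 1; ring
    have h2 : Real.exp (-l * N) * (Real.exp l) ^ (b + N) * (Real.exp (-l)) ^ b = 1 := by
      rw [← Real.exp_nat_mul, ← Real.exp_nat_mul, ← Real.exp_add, ← Real.exp_add]
      rw [Real.exp_eq_one_iff]; push_cast; ring
    have h3 := Real.exp_ne_zero (s * Real.exp l)
    have h4 := Real.exp_ne_zero (s * Real.exp (-l))
    rw [h1, mul_pow, mul_pow, Real.exp_neg (s * Real.exp l), Real.exp_neg (s * Real.exp (-l))]
    calc _ = Real.exp (-s) * s ^ (b + N) / ((b + N).factorial : ℝ) *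
          (Real.exp (-s) * s ^ b / (b.factorial : ℝ)) * 1 := by ring
      _ = _ := by rw [← h2]; field_simp
  have hel : s ≤ s * Real.exp l := le_mul_of_one_le_right hs.le (Real.one_le_exp hl)
  have hpos : 0 < s * Real.exp l := by positivity
  have hsup : ∀ b, pois (s * Real.exp l) b ≤ min 1 (1 / √s) := by
    intro b
    refine le_min (pois_le_one hpos.le b) ((pois_le hpos b).trans ?_)
    have := Real.sqrt_pos.2 hs
    gcongr
  have hmin : 0 ≤ min 1 (1 / √s) := by positivity
  calc _ ≤ ∑' b : ℕ, ENNReal.ofReal (min 1 (1 / √s) *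
          Real.exp (2 * s * (Real.cosh l - 1) - l * N)) *
          ENNReal.ofReal (pois (s * Real.exp (-l)) b) := by
        refine ENNReal.tsum_le_tsum fun b => ?_
        rw [← ENNReal.ofReal_mul (by positivity)]
        refine ENNReal.ofReal_le_ofReal ?_
        rw [htilt b]
        have h5 := pois_nonneg (μ := s * Real.exp (-l)) (by positivity) b
        calc _ ≤ Real.exp (2 * s * (Real.cosh l - 1) - l * N) *
              (min 1 (1 / √s) * pois (s * Real.exp (-l)) b) := by
              gcongr; exact hsup _
          _ = _ := by ring
    _ = _ := by
        rw [ENNReal.tsum_mul_left, tsum_pois (by positivity), mul_one]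

lemma le_skellam (s : ℝ) (hs : 1 ≤ s) (n : ℤ) (hn : (n.natAbs : ℝ) ≤ √s) :
    ENNReal.ofReal (Real.exp (-20) / (4 * √s)) ≤ skellam s n := by
  rw [skellam_natAbs, skellam_nat]
  set N := n.natAbs
  have hs0 : 0 < s := by linarith
  have hsq1 : 1 ≤ √s := Real.one_le_sqrt.2 hs
  have hsq2 : √s * √s = s := Real.mul_self_sqrt hs0.le
  -- The `⌈√s⌉` terms directly above `s` already give a contribution of order `1 / √s`.
  set A := (Finset.range ⌈√s⌉₊).map (addLeftEmbedding ⌈s⌉₊) with hA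
  refine le_trans ?_ (ENNReal.sum_le_tsum A)
  have hterm : ∀ b ∈ A, ENNReal.ofReal ((Real.exp (-10) / (2 * √s)) ^ 2) ≤
      ENNReal.ofReal (pois s (b + N) * pois s b) := by
    intro b hb
    rw [hA, Finset.mem_map] at hb
    obtain ⟨i, hi, rfl⟩ := hb
    simp only [addLeftEmbedding_apply]
    have hi' : (i : ℝ) ≤ √s := (Nat.lt_ceil.1 (Finset.mem_range.1 hi)).le
    have hc1 := Nat.le_ceil s
    have hc2 := Nat.ceil_lt_add_one hs0.le
    have hi0 : (0 : ℝ) ≤ i := Nat.cast_nonneg i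
    have hN0 : (0 : ℝ) ≤ N := Nat.cast_nonneg N
    refine ENNReal.ofReal_le_ofReal ?_
    rw [sq]
    refine mul_le_mul (le_pois hs _ ?_ ?_) (le_pois hs _ ?_ ?_) (by positivity)
      (pois_nonneg hs0.le _) <;> push_cast <;> linarith
  refine le_trans ?_ (Finset.sum_le_sum hterm)
  rw [Finset.sum_const, hA, Finset.card_map, Finset.card_range, nsmul_eq_mul,
    ← ENNReal.ofReal_natCast, ← ENNReal.ofReal_mul (by positivity)]
  refine ENNReal.ofReal_le_ofReal ?_
  calc Real.exp (-20) / (4 * √s) = √s * (Real.exp (-10) / (2 * √s)) ^ 2 := by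
        rw [show (-20 : ℝ) = -10 + -10 by norm_num, Real.exp_add]; field_simp; ring
    _ ≤ _ := by gcongr; exact Nat.le_ceil _

/-! ### The heat kernel in dimension `d` -/

/-- The sup norm on `ℤ^d`, as a natural number. -/
def supZ (d : ℕ) (x : Fin d → ℤ) : ℕ := Finset.univ.sup fun i => (x i).natAbs

lemma natAbs_le_supZ (d : ℕ) (x : Fin d → ℤ) (i : Fin d) : (x i).natAbs ≤ supZ d x :=
  Finset.le_sup (f := fun i => (x i).natAbs) (Finset.mem_univ i)

lemma exists_natAbs_eq_supZ (d : ℕ) (hd : 0 < d) (x : Fin d → ℤ) :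
    ∃ i, (x i).natAbs = supZ d x := by
  have : Nonempty (Fin d) := ⟨⟨0, hd⟩⟩
  obtain ⟨i, -, hi⟩ := Finset.exists_mem_eq_sup Finset.univ Finset.univ_nonempty
    (fun i => (x i).natAbs)
  exact ⟨i, hi.symm⟩

lemma heat_le_diag (d : ℕ) (hd : 0 < d) (s : ℝ) (hs : 0 < s) (x : Fin d → ℤ) :
    heat d s x ≤ ENNReal.ofReal ((1 / √s) ^ d) := by
  rw [heat_eq_prod d hd s hs.le]
  have h : ∀ i ∈ Finset.univ, skellam s (x i) ≤ ENNReal.ofReal (1 / √s) := by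
    intro i _
    refine (skellam_le s hs 0 le_rfl (x i)).trans (ENNReal.ofReal_le_ofReal ?_)
    simp
  calc _ ≤ ∏ _i : Fin d, ENNReal.ofReal (1 / √s) := Finset.prod_le_prod' h
    _ = _ := by
      rw [Finset.prod_const, Finset.card_univ, Fintype.card_fin,
        ENNReal.ofReal_pow (by positivity)]

lemma cosh_sub_one_le {l : ℝ} (h0 : 0 ≤ l) (h1 : l ≤ 1) : Real.cosh l - 1 ≤ l ^ 2 := by
  have h2 := Real.cosh_le_exp_half_sq l
  have h3 := Real.abs_exp_sub_one_le (x := l ^ 2 / 2) (by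
    rw [abs_of_nonneg (by positivity)]; nlinarith)
  rw [abs_of_nonneg (by positivity : 0 ≤ l ^ 2 / 2)] at h3
  linarith [le_abs_self (Real.exp (l ^ 2 / 2) - 1)]

/-- Off-diagonal decay: Gaussian for `s ≥ m / 4` and exponential below. Only one coordinate of
maximal modulus is tilted. -/
lemma heat_le_off (d : ℕ) (hd : 0 < d) (s : ℝ) (hs : 0 < s) (x : Fin d → ℤ) :
    heat d s x ≤ ENNReal.ofReal ((min 1 (1 / √s)) ^ d *
      Real.exp (-((supZ d x : ℝ) / 2 * min 1 ((supZ d x : ℝ) / (4 * s))))) := by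
  rw [heat_eq_prod d hd s hs.le]
  obtain ⟨i₀, hi₀⟩ := exists_natAbs_eq_supZ d hd x
  set m : ℝ := (supZ d x : ℝ) with hm
  have hm0 : 0 ≤ m := Nat.cast_nonneg _
  set l : ℝ := min 1 (m / (4 * s)) with hl
  have hl0 : 0 ≤ l := by positivity
  have hl1 : l ≤ 1 := min_le_left _ _
  have hl2 : l * (4 * s) ≤ m := by
    rw [← le_div_iff₀ (by positivity)]; exact min_le_right _ _
  have hmin : 0 ≤ min 1 (1 / √s) := by positivity
  set E : ℝ := Real.exp (-(m / 2 * l)) with hE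
  have h : ∀ i ∈ Finset.univ, skellam s (x i) ≤
      ENNReal.ofReal (min 1 (1 / √s)) * (if i = i₀ then ENNReal.ofReal E else 1) := by
    intro i _
    split_ifs with hi
    · subst hi
      refine (skellam_le s hs l hl0 (x i)).trans ?_
      rw [← ENNReal.ofReal_mul hmin]
      refine ENNReal.ofReal_le_ofReal ?_
      gcongr
      rw [hE, hi₀]
      apply Real.exp_le_exp.2
      have := cosh_sub_one_le hl0 hl1
      nlinarith
    · rw [mul_one]
      refine (skellam_le s hs 0 le_rfl (x i)).trans (ENNReal.ofReal_le_ofReal ?_)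
      simp
  refine (Finset.prod_le_prod' h).trans (le_of_eq ?_)
  rw [Finset.prod_mul_distrib, Finset.prod_const, Finset.card_univ, Fintype.card_fin,
    Finset.prod_ite_eq', if_pos (Finset.mem_univ _), ENNReal.ofReal_mul (by positivity),
    ENNReal.ofReal_pow hmin]

lemma le_heat (d : ℕ) (hd : 0 < d) (s : ℝ) (hs : 1 ≤ s) (x : Fin d → ℤ)
    (hx : (supZ d x : ℝ) ≤ √s) :
    ENNReal.ofReal ((Real.exp (-20) / (4 * √s)) ^ d) ≤ heat d s x := by
  rw [heat_eq_prod d hd s (by linarith)]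
  calc _ = ∏ _i : Fin d, ENNReal.ofReal (Real.exp (-20) / (4 * √s)) := by
        rw [Finset.prod_const, Finset.card_univ, Fintype.card_fin,
          ENNReal.ofReal_pow (by positivity)]
    _ ≤ _ := Finset.prod_le_prod' fun i _ => le_skellam s hs (x i)
        (le_trans (by exact_mod_cast natAbs_le_supZ d x i) hx)

/-! ### Time integrals of the heat kernel -/

section TimeIntegrals

open MeasureTheory

/-- A Gamma integral, with rate `2d(1 + α)`. -/
lemma integral_pois (k : ℕ) (d : ℕ) (hd : 0 < d) (α : ℝ) (hα : 0 ≤ α) :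
    ∫⁻ s in Set.Ioi (0 : ℝ), ENNReal.ofReal (s * Real.exp (-(2 * d * α * s)) * pois (2 * d * s) k)
      = ENNReal.ofReal ((k + 1) / ((2 * d) ^ 2 * (1 + α) ^ (k + 2))) := by
  have hd' : (0 : ℝ) < d := by exact_mod_cast hd
  have hb : 0 < 2 * d * (1 + α) := by positivity
  have hI := Real.integral_rpow_mul_exp_neg_mul_Ioi (a := k + 2) (by positivity) hb
  have hG : Real.Gamma (k + 2) = ((k + 1).factorial : ℝ) := by
    have := Real.Gamma_nat_eq_factorial (k + 1)
    rw [← this]; push_cast; congr 1; ring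
  have hval : ∫ s in Set.Ioi (0 : ℝ), s * Real.exp (-(2 * d * α * s)) * pois (2 * d * s) k
      = (k + 1) / ((2 * d) ^ 2 * (1 + α) ^ (k + 2)) := by
    have h1 : ∫ s in Set.Ioi (0 : ℝ), s * Real.exp (-(2 * d * α * s)) * pois (2 * d * s) k
        = ∫ s in Set.Ioi (0 : ℝ), ((2 * d) ^ k / k.factorial : ℝ) *
          (s ^ ((k : ℝ) + 2 - 1) * Real.exp (-(2 * d * (1 + α) * s))) := by
      refine setIntegral_congr_fun measurableSet_Ioi fun s hs => ?_
      have hs0 : (0 : ℝ) < s := hs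
      have h2 : s ^ ((k : ℝ) + 2 - 1) = s ^ (k + 1) := by
        rw [← Real.rpow_natCast]; congr 1; push_cast; ring
      simp only [h2]
      unfold pois
      rw [show -(2 * d * (1 + α) * s) = -(2 * d * α * s) + -(2 * d * s) by ring, Real.exp_add,
        mul_pow, pow_succ]
      ring
    rw [h1, integral_const_mul, hI, hG]
    have h3 : (1 / (2 * (d : ℝ) * (1 + α))) ^ ((k : ℝ) + 2) =
        1 / ((2 * (d : ℝ)) ^ (k + 2) * (1 + α) ^ (k + 2)) := by
      rw [show (k : ℝ) + 2 = ((k + 2 : ℕ) : ℝ) by push_cast; ring, Real.rpow_natCast, div_pow,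
        one_pow, mul_pow _ (1 + α)]
    rw [h3, Nat.factorial_succ]
    push_cast
    field_simp
    ring
  rw [← hval, ofReal_integral_eq_lintegral_ofReal]
  · refine Integrable.of_integral_ne_zero ?_
    rw [hval]; positivity
  · filter_upwards [ae_restrict_mem measurableSet_Ioi] with s hs
    have hs0 : (0 : ℝ) < s := hs
    have := pois_nonneg (μ := 2 * d * s) (by positivity) k
    positivity

/-- For `α = 0` the right-hand side is `(2d)⁻² (g⋆g)(x)`; for `α > 0` the factor `(1 + α)^{-k}`
dominates the killing `(1 - α)^k`. -/
lemma lintegral_heat (d : ℕ) (hd : 0 < d) (α : ℝ) (hα : 0 ≤ α) (x : Fin d → ℤ) :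
    ∫⁻ s in Set.Ioi (0 : ℝ), ENNReal.ofReal (s * Real.exp (-(2 * d * α * s))) * heat d s x
      = ∑' k : ℕ, ENNReal.ofReal ((k + 1) / ((2 * d) ^ 2 * (1 + α) ^ (k + 2))) * srwP d k x := by
  have h1 : ∀ k : ℕ, Measurable fun s : ℝ =>
      ENNReal.ofReal (s * Real.exp (-(2 * d * α * s)) * pois (2 * d * s) k) := by
    intro k; unfold pois; fun_prop
  calc _ = ∫⁻ s in Set.Ioi (0 : ℝ), ∑' k : ℕ,
        ENNReal.ofReal (s * Real.exp (-(2 * d * α * s)) * pois (2 * d * s) k) * srwP d k x := by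
        refine setLIntegral_congr_fun measurableSet_Ioi fun s hs => ?_
        have hs0 : (0 : ℝ) < s := hs
        simp only [heat]
        rw [← ENNReal.tsum_mul_left]
        refine tsum_congr fun k => ?_
        rw [← mul_assoc, ← ENNReal.ofReal_mul (by positivity)]
    _ = _ := by
        rw [lintegral_tsum fun k => ((h1 k).mul_const _).aemeasurable]
        refine tsum_congr fun k => ?_
        rw [lintegral_mul_const _ (h1 k), integral_pois k d hd α hα]

/-- The lower bound `g⋆g ≥ c m^{4-d}`, from the times `s` between `m²` and `2m²`. -/
lemma le_convE_green (d : ℕ) (hd : 0 < d) (x : Fin d → ℤ) (hx : 1 ≤ supZ d x) :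
    ENNReal.ofReal ((Real.exp (-20) / 8) ^ d * ((supZ d x : ℝ) ^ 4 / (supZ d x : ℝ) ^ d)) ≤
      convE d (green d) (green d) x := by
  have hd' : (1 : ℝ) ≤ d := by exact_mod_cast hd
  set m : ℝ := (supZ d x : ℝ) with hm
  have hm1 : 1 ≤ m := Nat.one_le_cast.2 hx
  have h1 : ∫⁻ s in Set.Ioi (0 : ℝ), ENNReal.ofReal (s * Real.exp (-(2 * d * 0 * s))) * heat d s x
      ≤ convE d (green d) (green d) x := by
    rw [lintegral_heat d hd 0 le_rfl, convE_green]
    refine ENNReal.tsum_le_tsum fun k => ?_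
    gcongr
    calc ENNReal.ofReal ((k + 1) / ((2 * d) ^ 2 * (1 + 0) ^ (k + 2)))
        ≤ ENNReal.ofReal (k + 1) := by
          refine ENNReal.ofReal_le_ofReal (div_le_self (by positivity) ?_)
          simp only [add_zero, one_pow, mul_one]
          nlinarith
      _ = _ := by rw [ENNReal.ofReal_add (by positivity) (by norm_num)]; simp
  refine le_trans ?_ h1
  calc _ = ∫⁻ s in Set.Ioc (m ^ 2) (2 * m ^ 2),
        ENNReal.ofReal (m ^ 2 * (Real.exp (-20) / (8 * m)) ^ d) := by
        rw [setLIntegral_const, Real.volume_Ioc, ← ENNReal.ofReal_mul (by positivity)]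
        congr 1
        rw [div_pow, div_pow, mul_pow]
        field_simp
        ring
    _ ≤ ∫⁻ s in Set.Ioc (m ^ 2) (2 * m ^ 2),
        ENNReal.ofReal (s * Real.exp (-(2 * d * 0 * s))) * heat d s x := by
        refine setLIntegral_mono' measurableSet_Ioc fun s hs => ?_
        have hs1 : 1 ≤ s := by nlinarith [hs.1]
        have hms : m ≤ √s := Real.le_sqrt_of_sq_le hs.1.le
        have hms2 : √s ≤ 2 * m := by
          rw [Real.sqrt_le_left (by positivity)]
          nlinarith [hs.2]
        have h2 := le_heat d hd s hs1 x hms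
        rw [ENNReal.ofReal_mul (by positivity)]
        refine mul_le_mul' (ENNReal.ofReal_le_ofReal ?_)
          (le_trans (ENNReal.ofReal_le_ofReal ?_) h2)
        · simpa using hs.1.le
        · gcongr ?_ ^ d
          apply div_le_div_of_nonneg_left (by positivity) (by positivity)
          linarith
    _ ≤ _ := lintegral_mono_set fun s hs => lt_of_le_of_lt (by positivity) hs.1

/-- The exponential decay of the heat kernel absorbs the diagonal factor `s^{-d/2}`, leaving
`m^{-d}`, and combines with the killing `e^{-2dαs}` by the arithmetic-geometric mean
inequality. -/
lemma small_time (d : ℕ) (hd : 0 < d) : ∃ C : ℝ, 0 < C ∧ ∀ m : ℝ, 1 ≤ m → ∀ α ∈ Set.Ioo (0 : ℝ) 1,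
    ∀ s : ℝ, 0 < s →
    Real.exp (-(2 * d * α * s)) * ((min 1 (1 / √s)) ^ d *
      Real.exp (-(m / 2 * min 1 (m / (4 * s))))) ≤ C / m ^ d * Real.exp (-(√α * m / 4)) := by
  have hd' : (1 : ℝ) ≤ d := by exact_mod_cast hd
  refine ⟨16 ^ d * d.factorial + 1, by positivity, fun m hm α hα s hs => ?_⟩
  have hm0 : 0 < m := by linarith
  have hα0 := hα.1
  have hsα : √α * √α = α := Real.mul_self_sqrt hα0.le
  have hsα1 : √α ≤ 1 := Real.sqrt_le_one.2 hα.2.le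
  have hsα0 : 0 < √α := Real.sqrt_pos.2 hα0
  have hss : √s * √s = s := Real.mul_self_sqrt hs.le
  have hss0 : 0 < √s := Real.sqrt_pos.2 hs
  rcases le_total (4 * s) m with h | h
  · rw [min_eq_left ((one_le_div (by positivity)).2 h)]
    have h1 : Real.exp (-(2 * d * α * s)) ≤ 1 := Real.exp_le_one_iff.2 (by
      have : 0 ≤ 2 * d * α * s := by positivity
      linarith)
    have h2 : (min 1 (1 / √s)) ^ d ≤ 1 := pow_le_one₀ (by positivity) (min_le_left _ _)
    have h3 := Real.pow_div_factorial_le_exp (m / 4) (by positivity) d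
    have h4 : m ^ d ≤ 16 ^ d * d.factorial * Real.exp (m / 4) := by
      rw [div_pow, div_div, div_le_iff₀ (by positivity)] at h3
      refine h3.trans ?_
      rw [mul_comm]
      have : (4 : ℝ) ^ d ≤ 16 ^ d := by gcongr; norm_num
      gcongr
    have h5 : Real.exp (-(m / 2 * 1)) = Real.exp (-(m / 4)) * Real.exp (-(m / 4)) := by
      rw [← Real.exp_add]; congr 1; ring
    have h6 : Real.exp (-(m / 4)) ≤ Real.exp (-(√α * m / 4)) := by
      apply Real.exp_le_exp.2; nlinarith
    have h7 : Real.exp (-(m / 4)) ≤ (16 ^ d * d.factorial + 1) / m ^ d := by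
      rw [le_div_iff₀ (by positivity), Real.exp_neg, inv_mul_le_iff₀ (Real.exp_pos _)]
      nlinarith [Real.exp_pos (m / 4)]
    calc _ ≤ 1 * (1 * Real.exp (-(m / 2 * 1))) := by gcongr
      _ = Real.exp (-(m / 4)) * Real.exp (-(m / 4)) := by rw [← h5]; ring
      _ ≤ _ := mul_le_mul h7 h6 (by positivity) (by positivity)
  · rw [min_eq_right ((div_le_one (by positivity)).2 h)]
    set y := m / √s with hy
    have hy0 : 0 < y := by positivity
    have hy2 : y ^ 2 = m ^ 2 / s := by rw [hy, div_pow, Real.sq_sqrt hs.le]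
    have h1 : y ^ d ≤ (16 ^ d * d.factorial + 1) * Real.exp (y ^ 2 / 16) := by
      have h3 := Real.pow_div_factorial_le_exp (y ^ 2 / 16) (by positivity) d
      rw [div_pow, div_div, div_le_iff₀ (by positivity)] at h3
      have h4 : y ^ d ≤ 1 + (y ^ 2) ^ d := by
        rw [← pow_mul, mul_comm 2 d, pow_mul]
        nlinarith [sq_nonneg (y ^ d - 1)]
      have h5 : 1 ≤ Real.exp (y ^ 2 / 16) := Real.one_le_exp (by positivity)
      nlinarith
    have h2 : (min 1 (1 / √s)) ^ d ≤ (1 / √s) ^ d := by gcongr; exact min_le_right _ _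
    have h3 : Real.exp (-(2 * d * α * s)) * Real.exp (-(m / 2 * (m / (4 * s)))) ≤
        Real.exp (-(y ^ 2 / 16)) * Real.exp (-(√α * m / 4)) := by
      rw [← Real.exp_add, ← Real.exp_add]
      apply Real.exp_le_exp.2
      have e1 : m / 2 * (m / (4 * s)) = y ^ 2 / 16 + y ^ 2 / 16 := by rw [hy2]; field_simp; ring
      have e2 : m = y * √s := by rw [hy]; field_simp
      have e3 : α * s ≤ 2 * d * α * s := by
        have : 0 < α * s := by positivity
        nlinarith
      -- Arithmetic-geometric mean for `√α √s` and `y / 4`.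
      have e4 : √α * m / 4 ≤ α * s + y ^ 2 / 16 := by
        have : α * s = (√α * √s) ^ 2 := by rw [mul_pow, Real.sq_sqrt hα0.le, Real.sq_sqrt hs.le]
        rw [this, e2]
        have hpos : 0 ≤ √α * √s * y := by positivity
        nlinarith [sq_nonneg (√α * √s - y / 4)]
      rw [e1]; linarith
    have h4 : (1 / √s) ^ d = y ^ d / m ^ d := by rw [hy, div_pow, div_pow, one_pow]; field_simp
    calc _ ≤ Real.exp (-(2 * d * α * s)) * ((1 / √s) ^ d * Real.exp (-(m / 2 * (m / (4 * s))))) := by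
          gcongr
      _ = (1 / √s) ^ d * (Real.exp (-(2 * d * α * s)) * Real.exp (-(m / 2 * (m / (4 * s))))) := by
          ring
      _ ≤ (y ^ d / m ^ d) * (Real.exp (-(y ^ 2 / 16)) * Real.exp (-(√α * m / 4))) := by
          rw [h4]; gcongr
      _ ≤ ((16 ^ d * d.factorial + 1) * Real.exp (y ^ 2 / 16) / m ^ d) *
          (Real.exp (-(y ^ 2 / 16)) * Real.exp (-(√α * m / 4))) := by gcongr
      _ = _ := by
          rw [Real.exp_neg (y ^ 2 / 16)]; field_simp

lemma lintegral_tail (d : ℕ) (hd : 4 < d) (m : ℝ) (hm : 1 ≤ m) :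
    ∫⁻ s in Set.Ioi (m ^ 2), ENNReal.ofReal (s * (1 / √s) ^ d) ≤
      ENNReal.ofReal (2 * (m ^ 4 / m ^ d)) := by
  have hd' : (5 : ℝ) ≤ d := by exact_mod_cast hd
  have hm0 : 0 < m := by linarith
  have hm2 : 0 < m ^ 2 := by positivity
  have ha : (1 - d / 2 : ℝ) < -1 := by linarith
  have hint := integrableOn_Ioi_rpow_of_lt ha hm2
  have hval := integral_Ioi_rpow_of_lt ha hm2
  have h1 : ∫⁻ s in Set.Ioi (m ^ 2), ENNReal.ofReal (s * (1 / √s) ^ d) =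
      ∫⁻ s in Set.Ioi (m ^ 2), ENNReal.ofReal (s ^ (1 - d / 2 : ℝ)) := by
    refine setLIntegral_congr_fun measurableSet_Ioi fun s hs => ?_
    have hs0 : 0 < s := hm2.trans hs
    congr 1
    rw [Real.rpow_sub hs0, Real.rpow_one, one_div, inv_pow, Real.sqrt_eq_rpow,
      ← Real.rpow_mul_natCast hs0.le, div_eq_mul_inv]
    congr 3; ring
  rw [h1, ← ofReal_integral_eq_lintegral_ofReal hint, hval]
  · refine ENNReal.ofReal_le_ofReal ?_
    have h2 : (m ^ 2 : ℝ) ^ (1 - d / 2 + 1 : ℝ) = m ^ 4 / m ^ d := by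
      rw [← Real.rpow_natCast m 2, ← Real.rpow_mul hm0.le, ← Real.rpow_natCast m 4,
        ← Real.rpow_natCast m d, ← Real.rpow_sub hm0]
      congr 1; push_cast; ring
    rw [h2]
    have h3 : 0 < m ^ 4 / m ^ d := by positivity
    rw [neg_div, ← div_neg, div_le_iff₀ (by linarith)]
    nlinarith
  · filter_upwards [ae_restrict_mem measurableSet_Ioi] with s hs
    have hs0 : 0 < s := hm2.trans hs
    positivity

lemma lintegral_heat_le (d : ℕ) (hd : 4 < d) : ∃ C : ℝ, 0 < C ∧ ∀ α ∈ Set.Ioo (0 : ℝ) 1,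
    ∀ x : Fin d → ℤ, 1 ≤ supZ d x →
    ∫⁻ s in Set.Ioi (0 : ℝ), ENNReal.ofReal (s * Real.exp (-(2 * d * α * s))) * heat d s x ≤
      ENNReal.ofReal ((C * Real.exp (-(√α * supZ d x / 4)) +
        2 * Real.exp (-(α * (supZ d x : ℝ) ^ 2))) * ((supZ d x : ℝ) ^ 4 / (supZ d x : ℝ) ^ d)) := by
  have hd0 : 0 < d := by omega
  have hd' : (1 : ℝ) ≤ d := by exact_mod_cast hd0
  obtain ⟨C, hC, hsmall⟩ := small_time d hd0
  refine ⟨C, hC, fun α hα x hx => ?_⟩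
  set m : ℝ := (supZ d x : ℝ) with hm
  have hm1 : 1 ≤ m := Nat.one_le_cast.2 hx
  have hm0 : 0 < m := by linarith
  have hα0 := hα.1
  rw [← Set.Ioc_union_Ioi_eq_Ioi (show (0 : ℝ) ≤ m ^ 2 by positivity)]
  refine (lintegral_union_le _ _ _).trans ?_
  rw [add_mul, ENNReal.ofReal_add (by positivity) (by positivity)]
  refine add_le_add ?_ ?_
  · calc _ ≤ ∫⁻ s in Set.Ioc 0 (m ^ 2),
          ENNReal.ofReal (m ^ 2 * (C / m ^ d * Real.exp (-(√α * m / 4)))) := by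
          refine setLIntegral_mono' measurableSet_Ioc fun s hs => ?_
          have hs0 : 0 < s := hs.1
          refine (mul_le_mul_right (heat_le_off d hd0 s hs0 x) _).trans ?_
          rw [← ENNReal.ofReal_mul (by positivity)]
          refine ENNReal.ofReal_le_ofReal ?_
          rw [mul_assoc]
          exact mul_le_mul hs.2 (hsmall m hm1 α hα s hs0) (by positivity) (by positivity)
      _ = _ := by
          rw [setLIntegral_const, Real.volume_Ioc, ← ENNReal.ofReal_mul (by positivity)]
          congr 1
          ring
  · calc _ ≤ ∫⁻ s in Set.Ioi (m ^ 2), ENNReal.ofReal (Real.exp (-(α * m ^ 2))) *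
          ENNReal.ofReal (s * (1 / √s) ^ d) := by
          refine setLIntegral_mono' measurableSet_Ioi fun s hs => ?_
          have hs1 : m ^ 2 < s := hs
          have hs0 : 0 < s := lt_trans (by positivity) hs1
          refine (mul_le_mul_right (heat_le_diag d hd0 s hs0 x) _).trans ?_
          rw [← ENNReal.ofReal_mul (by positivity), ← ENNReal.ofReal_mul (by positivity)]
          refine ENNReal.ofReal_le_ofReal ?_
          have h1 : Real.exp (-(2 * d * α * s)) ≤ Real.exp (-(α * m ^ 2)) := by
            apply Real.exp_le_exp.2
            have h2 : α * m ^ 2 ≤ α * s := by gcongr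
            have h3 : 0 < α * s := by positivity
            nlinarith
          calc _ = Real.exp (-(2 * d * α * s)) * (s * (1 / √s) ^ d) := by ring
            _ ≤ _ := by gcongr
      _ ≤ _ := by
          rw [lintegral_const_mul _ (by fun_prop)]
          refine (mul_le_mul_right (lintegral_tail d hd m hm1) _).trans ?_
          rw [← ENNReal.ofReal_mul (by positivity)]
          exact ENNReal.ofReal_le_ofReal (le_of_eq (by ring))

lemma killed_le (d : ℕ) (hd : 0 < d) (α : ℝ) (hα : α ∈ Set.Ioo (0 : ℝ) 1) (x : Fin d → ℤ) :
    ∑' k : ℕ, (k : ENNReal) * ENNReal.ofReal ((1 - α) ^ k) * srwP d k x ≤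
      ENNReal.ofReal (4 * (2 * d) ^ 2) * ∫⁻ s in Set.Ioi (0 : ℝ),
        ENNReal.ofReal (s * Real.exp (-(2 * d * α * s))) * heat d s x := by
  have hd' : (0 : ℝ) < d := by exact_mod_cast hd
  obtain ⟨hα0, hα1⟩ := hα
  rw [lintegral_heat d hd α hα0.le, ← ENNReal.tsum_mul_left]
  refine ENNReal.tsum_le_tsum fun k => ?_
  rw [← mul_assoc]
  refine mul_le_mul_left ?_ _
  rw [← ENNReal.ofReal_natCast, ← ENNReal.ofReal_mul (by positivity),
    ← ENNReal.ofReal_mul (by positivity)]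
  refine ENNReal.ofReal_le_ofReal ?_
  have h1 : (1 - α) ^ k * (1 + α) ^ k ≤ 1 := by
    rw [← mul_pow]
    exact pow_le_one₀ (by nlinarith) (by nlinarith)
  have h2 : (1 + α) ^ 2 ≤ 4 := by nlinarith
  have h3 : (1 - α) ^ k * (1 + α) ^ (k + 2) ≤ 4 := by
    rw [pow_add, ← mul_assoc]
    calc _ ≤ 1 * (4 : ℝ) := mul_le_mul h1 h2 (by positivity) (by norm_num)
      _ = 4 := by norm_num
  have h4 : 4 * (2 * (d : ℝ)) ^ 2 * ((k + 1) / ((2 * d) ^ 2 * (1 + α) ^ (k + 2))) =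
      (4 * (k + 1)) / (1 + α) ^ (k + 2) := by field_simp
  rw [h4, le_div_iff₀ (by positivity), mul_assoc]
  have hk : (0 : ℝ) ≤ k := Nat.cast_nonneg k
  nlinarith

end TimeIntegrals

/-! ### Decay of the killed sum -/

lemma nrmZ_le (d : ℕ) (x : Fin d → ℤ) : nrmZ d x ≤ √d * supZ d x := by
  unfold nrmZ
  rw [Real.sqrt_le_left (by positivity), mul_pow, Real.sq_sqrt (by positivity)]
  calc ∑ i, ((x i : ℝ)) ^ 2 ≤ ∑ _i : Fin d, (supZ d x : ℝ) ^ 2 := by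
        refine Finset.sum_le_sum fun i _ => ?_
        have h : |(x i : ℝ)| ≤ supZ d x := by
          rw [← Int.cast_abs, ← Nat.cast_natAbs]
          exact_mod_cast natAbs_le_supZ d x i
        rw [← sq_abs]
        gcongr
    _ = _ := by simp

lemma part_two (d : ℕ) (hd : 4 < d) (c₀ : ℝ) (hc₀ : 0 < c₀) :
    ∃ c₁ C' α₀ : ℝ, 0 < c₁ ∧ 0 < C' ∧ α₀ ∈ Set.Ioo (0 : ℝ) 1 ∧
      ∀ α ∈ Set.Ioo (0 : ℝ) α₀, ∀ x : Fin d → ℤ, c₀ / Real.sqrt α ≤ nrmZ d x →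
        ∑' k : ℕ, (k : ENNReal) * ENNReal.ofReal ((1 - α) ^ k) * srwP d k x ≤
          ENNReal.ofReal (C' * Real.exp (-(c₁ * nrmZ d x * Real.sqrt α))) *
            convE d (green d) (green d) x := by
  have hd0 : 0 < d := by omega
  have hd' : (1 : ℝ) ≤ d := by exact_mod_cast hd0
  obtain ⟨C, hC, hup⟩ := lintegral_heat_le d hd
  set cL : ℝ := (Real.exp (-20) / 8) ^ d with hcL
  have hcL0 : 0 < cL := by positivity
  set c₁ : ℝ := min (1 / 4) c₀ / d with hc₁
  have hmin0 : 0 < min (1 / 4) c₀ := lt_min (by norm_num) hc₀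
  refine ⟨c₁, 4 * (2 * d) ^ 2 * (C + 2) / cL, 1 / 2, by positivity, by positivity,
    by constructor <;> norm_num, fun α hα x hx => ?_⟩
  have hα' : α ∈ Set.Ioo (0 : ℝ) 1 := ⟨hα.1, by linarith [hα.2]⟩
  have hsα0 : 0 < √α := Real.sqrt_pos.2 hα.1
  have hsα : √α * √α = α := Real.mul_self_sqrt hα.1.le
  set r := nrmZ d x with hr
  have hr0 : 0 < r := lt_of_lt_of_le (by positivity) hx
  have hrα : c₀ ≤ r * √α := by rwa [div_le_iff₀ hsα0] at hx
  have hrm := nrmZ_le d x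
  rw [← hr] at hrm
  have hm : 1 ≤ supZ d x := by
    by_contra h
    have h0 : supZ d x = 0 := by omega
    rw [h0] at hrm
    simp at hrm
    linarith
  have hlow := le_convE_green d hd0 x hm
  have hupx := hup α hα' x hm
  set m : ℝ := (supZ d x : ℝ) with hmdef
  have hm0 : 0 < m := by
    have : (1 : ℝ) ≤ m := Nat.one_le_cast.2 hm
    linarith
  have hsd : √(d : ℝ) * √(d : ℝ) = d := Real.mul_self_sqrt (by positivity)
  have hsd1 : 1 ≤ √(d : ℝ) := Real.one_le_sqrt.2 hd'
  have hmd : r ≤ d * m := by nlinarith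
  set u := r * √α with hu
  have hu0 : 0 < u := by positivity
  have hc₁u : c₁ * r * √α = min (1 / 4) c₀ * u / d := by rw [hc₁, hu]; ring
  have e1 : Real.exp (-(√α * m / 4)) ≤ Real.exp (-(c₁ * r * √α)) := by
    apply Real.exp_le_exp.2
    rw [hc₁u, neg_le_neg_iff, div_le_iff₀ (by positivity)]
    calc min (1 / 4) c₀ * u ≤ 1 / 4 * u := by gcongr; exact min_le_left _ _
      _ ≤ 1 / 4 * (d * m * √α) := by rw [hu]; gcongr
      _ = _ := by ring
  have e2 : Real.exp (-(α * m ^ 2)) ≤ Real.exp (-(c₁ * r * √α)) := by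
    apply Real.exp_le_exp.2
    rw [hc₁u, neg_le_neg_iff, div_le_iff₀ (by positivity)]
    calc min (1 / 4) c₀ * u ≤ u * u := by gcongr; exact (min_le_right _ _).trans hrα
      _ = α * r ^ 2 := by rw [hu]; linear_combination r ^ 2 * hsα
      _ ≤ α * (√d * m) ^ 2 := by have := hα.1; gcongr
      _ = _ := by linear_combination α * m ^ 2 * hsd
  calc _ ≤ ENNReal.ofReal (4 * (2 * d) ^ 2) * ENNReal.ofReal ((C * Real.exp (-(√α * m / 4)) +
        2 * Real.exp (-(α * m ^ 2))) * (m ^ 4 / m ^ d)) :=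
        (killed_le d hd0 α hα' x).trans (mul_le_mul_right hupx _)
    _ ≤ ENNReal.ofReal (4 * (2 * d) ^ 2 * (C + 2) / cL * Real.exp (-(c₁ * r * √α))) *
        ENNReal.ofReal (cL * (m ^ 4 / m ^ d)) := by
        rw [← ENNReal.ofReal_mul (by positivity), ← ENNReal.ofReal_mul (by positivity)]
        refine ENNReal.ofReal_le_ofReal ?_
        calc _ ≤ 4 * (2 * (d : ℝ)) ^ 2 * ((C * Real.exp (-(c₁ * r * √α)) +
              2 * Real.exp (-(c₁ * r * √α))) * (m ^ 4 / m ^ d)) := by gcongr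
          _ = _ := by field_simp
    _ ≤ _ := by gcongr

/-- For `d > 4`:
(i) there are constants `0 < c ≤ C` (depending only on `d`) with
`c(g⋆g)(x) ≤ Σ_k k·P(X_k = x) ≤ C(g⋆g)(x)` for all `x`, and consequently
`Σ_k k(1−α)^k P(X_k = x) ≤ C(g⋆g)(x)` for every `α ∈ (0,1)`;
(ii) for every `c₀ > 0` there are `c₁, C' > 0` and `α₀ ∈ (0,1)` (depending only on `d, c₀`)
such that for `α ∈ (0,α₀)` and `‖x‖ ≥ c₀/√α`:
`Σ_k k(1−α)^k P(X_k = x) ≤ C' e^{−c₁‖x‖√α}(g⋆g)(x)`. -/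
theorem weighted_green_bounds (d : ℕ) (hd : 4 < d) :
    (∃ c C : ℝ, 0 < c ∧ c ≤ C ∧ ∀ x : Fin d → ℤ,
      (ENNReal.ofReal c * convE d (green d) (green d) x ≤
          ∑' k : ℕ, (k : ENNReal) * srwP d k x ∧
        ∑' k : ℕ, (k : ENNReal) * srwP d k x ≤
          ENNReal.ofReal C * convE d (green d) (green d) x) ∧
      ∀ α ∈ Set.Ioo (0 : ℝ) 1,
        ∑' k : ℕ, (k : ENNReal) * ENNReal.ofReal ((1 - α) ^ k) * srwP d k x ≤
          ENNReal.ofReal C * convE d (green d) (green d) x) ∧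
    ∀ c₀ : ℝ, 0 < c₀ →
      ∃ c₁ C' α₀ : ℝ, 0 < c₁ ∧ 0 < C' ∧ α₀ ∈ Set.Ioo (0 : ℝ) 1 ∧
        ∀ α ∈ Set.Ioo (0 : ℝ) α₀, ∀ x : Fin d → ℤ, c₀ / Real.sqrt α ≤ nrmZ d x →
          ∑' k : ℕ, (k : ENNReal) * ENNReal.ofReal ((1 - α) ^ k) * srwP d k x ≤
            ENNReal.ofReal (C' * Real.exp (-(c₁ * nrmZ d x * Real.sqrt α))) *
              convE d (green d) (green d) x := by
  exact ⟨part_one d hd, part_two d hd⟩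
end
end
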